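/- arXiv:2603.07945 — 6 statements merged into one kernel-verified Lean document; each statement's English description precedes it below -/
import Mathlib

section
/- Let R be a henselian Gorenstein Noetherian local ring with dim R > 0 satisfying the generalized Auslander–Reiten condition (GARC), and let 𝒳 be a resolving subcategory of the category of finitely generated R-modules. Then 𝒳 is strictly contained in 𝒞(𝒳) (i.e. there exists a module in 𝒞(𝒳) outside 𝒳) if and only if every module in 𝒳 is maximal Cohen–Macaulay. -/
open CategoryTheory IsLocalRing

universe u

noncomputable section

/-- The `i`-th Ext module of two `R`-modules. -/
abbrev ExtMod (R : Type u) [CommRing R] (i : ℕ) (M N : ModuleCat.{u} R) : ModuleCat R :=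
  ((Ext R (ModuleCat.{u} R) i).obj (Opposite.op M)).obj N

/-- Vanishing of the `i`-th Ext module: `Ext_R^i(M, N) = 0`. -/
def ExtVanish (R : Type u) [CommRing R] (i : ℕ) (M N : ModuleCat.{u} R) : Prop :=
  Subsingleton (ExtMod R i M N)

variable (R : Type u) [CommRing R]

/-- `0 → A → B → C → 0` is a short exact sequence. -/
def IsSES {A B C : ModuleCat.{u} R} (f : A →ₗ[R] B) (g : B →ₗ[R] C) : Prop :=
  Function.Injective f ∧ Function.Exact f g ∧ Function.Surjective g

/-- A resolving subcategory of the category of finitely generated `R`-modules. -/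
structure IsResolving (𝒳 : Set (ModuleCat.{u} R)) : Prop where
  finite : ∀ M ∈ 𝒳, Module.Finite R M
  isoClosed : ∀ {M N : ModuleCat.{u} R}, M ∈ 𝒳 → (↥M ≃ₗ[R] ↥N) → N ∈ 𝒳
  freeMem : ∀ M : ModuleCat.{u} R, Module.Finite R M → Module.Free R M → M ∈ 𝒳
  summandClosed : ∀ M N : ModuleCat.{u} R, ModuleCat.of R (↥M × ↥N) ∈ 𝒳 → M ∈ 𝒳
  extClosed : ∀ (A B C : ModuleCat.{u} R) (f : A →ₗ[R] B) (g : B →ₗ[R] C),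
    IsSES R f g → A ∈ 𝒳 → C ∈ 𝒳 → B ∈ 𝒳
  kerClosed : ∀ (A B C : ModuleCat.{u} R) (f : A →ₗ[R] B) (g : B →ₗ[R] C),
    IsSES R f g → B ∈ 𝒳 → C ∈ 𝒳 → A ∈ 𝒳

/-- `f : X → M` is a right `𝒳`-approximation of `M`. -/
def IsRightApprox (𝒳 : Set (ModuleCat.{u} R)) {X M : ModuleCat.{u} R} (f : X →ₗ[R] M) : Prop :=
  X ∈ 𝒳 ∧ ∀ W ∈ 𝒳, ∀ g : ↥W →ₗ[R] ↥M, ∃ h : ↥W →ₗ[R] ↥X, f ∘ₗ h = g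

/-- `M` admits a right `𝒳`-approximation. -/
def HasRightApprox (𝒳 : Set (ModuleCat.{u} R)) (M : ModuleCat.{u} R) : Prop :=
  ∃ (X : ModuleCat.{u} R) (f : X →ₗ[R] M), IsRightApprox R 𝒳 f

/-- `𝒳` is contravariantly infinite: no finitely generated module outside `𝒳` admits
a right `𝒳`-approximation. -/
def ContravariantlyInfinite (𝒳 : Set (ModuleCat.{u} R)) : Prop :=
  ∀ M : ModuleCat.{u} R, Module.Finite R M → M ∉ 𝒳 → ¬ HasRightApprox R 𝒳 M

/-- `𝒳` is contravariantly finite: every finitely generated module admits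
a right `𝒳`-approximation. -/
def ContravariantlyFinite (𝒳 : Set (ModuleCat.{u} R)) : Prop :=
  ∀ M : ModuleCat.{u} R, Module.Finite R M → HasRightApprox R 𝒳 M

/-- The restricted functor `Hom_R(-, C)|_𝒳` is finitely presented, i.e. `C ∈ 𝒞(𝒳)`. -/
def MemCC (𝒳 : Set (ModuleCat.{u} R)) (C : ModuleCat.{u} R) : Prop :=
  ∃ (X₀ X₁ : ModuleCat.{u} R) (g : ↥X₁ →ₗ[R] ↥X₀) (f : ↥X₀ →ₗ[R] ↥C), X₀ ∈ 𝒳 ∧ X₁ ∈ 𝒳 ∧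
    ∀ W ∈ 𝒳, Function.Surjective (fun h : ↥W →ₗ[R] ↥X₀ => f ∘ₗ h) ∧
      Function.Exact (fun h : ↥W →ₗ[R] ↥X₁ => g ∘ₗ h) (fun h : ↥W →ₗ[R] ↥X₀ => f ∘ₗ h)

/-- `𝒳` is coherent: `𝒞(𝒳) = rap 𝒳`. -/
def Coherent (𝒳 : Set (ModuleCat.{u} R)) : Prop :=
  ∀ M : ModuleCat.{u} R, Module.Finite R M → (MemCC R 𝒳 M ↔ HasRightApprox R 𝒳 M)

/-- The right Ext-orthogonal class `𝒳^⊥` of a class `𝒳` of finitely generated modules. -/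
def XPerp (𝒳 : Set (ModuleCat.{u} R)) : Set (ModuleCat.{u} R) :=
  {Y | Module.Finite R Y ∧ ∀ X ∈ 𝒳, ∀ i, 0 < i → ExtVanish R i X Y}

/-- The projective dimension of `M` is at most `n`. -/
def ProjDimLE (M : ModuleCat.{u} R) (n : ℕ) : Prop :=
  ∀ N : ModuleCat.{u} R, ∀ i, n < i → ExtVanish R i M N

/-- The depth of an `R`-module over a local ring: `inf { i | Ext^i(k, M) ≠ 0 }`. -/
def moduleDepth [IsLocalRing R] (M : ModuleCat.{u} R) : ℕ∞ :=
  sInf ((fun i : ℕ => (i : ℕ∞)) ''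
    {i : ℕ | ¬ ExtVanish R i (ModuleCat.of R (ResidueField R)) M})

/-- `M` is a maximal Cohen–Macaulay `R`-module: `depth M ≥ dim R`. -/
def IsMCM [IsLocalRing R] (M : ModuleCat.{u} R) : Prop :=
  ringKrullDim R ≤ (moduleDepth R M : WithBot ℕ∞)

/-- A Gorenstein local ring: `∃ n, Ext^i(M, R) = 0` for every finitely generated `M`
and every `i > n`. -/
def IsGorensteinLocalRing : Prop :=
  ∃ n : ℕ, ∀ M : ModuleCat.{u} R, Module.Finite R M →
    ∀ i, n < i → ExtVanish R i M (ModuleCat.of R R)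

/-- A regular local ring: Noetherian local with `dim R = dim_k 𝔪/𝔪²`. -/
def IsRegularLocal [IsLocalRing R] : Prop :=
  IsNoetherianRing R ∧
    ringKrullDim R = (Module.finrank (ResidueField R) (CotangentSpace R) : ℕ)

/-- Witness that the local ring `R` is a complete intersection: its `𝔪`-adic completion
is `Q/(f₁, …, f_c)` for a regular local ring `Q` and a `Q`-regular sequence `f₁, …, f_c`. -/
structure CompleteIntersectionWitness [IsLocalRing R] : Type (u + 1) where
  Q : Type u
  [commRing : CommRing Q]
  [localRing : IsLocalRing Q]
  regular : IsRegularLocal Q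
  fs : List Q
  regSeq : RingTheory.Sequence.IsRegular Q fs
  equiv : AdicCompletion (maximalIdeal R) R ≃+* Q ⧸ Ideal.span {x : Q | x ∈ fs}

/-- The local ring `R` is a complete intersection. -/
def IsCompleteIntersection [IsLocalRing R] : Prop :=
  Nonempty (CompleteIntersectionWitness R)

end

section Chunk1
open CategoryTheory IsLocalRing

namespace S12
variable {R : Type u} [CommRing R]

/-- vanishing of the derived-category Ext -/
def EV (R : Type u) [CommRing R] (M N : Type u) [AddCommGroup M] [AddCommGroup N] [Module R M]
    [Module R N] (i : ℕ) : Prop :=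
  Subsingleton (Abelian.Ext.{u} (ModuleCat.of R M) (ModuleCat.of R N) i)

lemma extVanish_iff (i : ℕ) (M N : ModuleCat.{u} R) : ExtVanish R i M N ↔ EV R M N i := by
  let P : ProjectiveResolution M := projectiveResolution M
  have h1 : ExtVanish R i M N ↔ Limits.IsZero ((P.complex.linearYonedaObj R N).homology i) := by
    unfold ExtVanish ExtMod
    rw [← ModuleCat.isZero_iff_subsingleton]
    exact Iso.isZero_iff (P.isoExt (R := R) i N)
  rw [h1, ← HomologicalComplex.exactAt_iff_isZero_homology]
  cases i with
  | zero =>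
    rw [HomologicalComplex.exactAt_iff' _ 0 0 1 (by simp) (by simp), ShortComplex.moduleCat_exact_iff]
    have h2 : EV R M N 0 ↔ Subsingleton (M ⟶ N) := Abelian.Ext.homEquiv₀.subsingleton_congr
    rw [h2]
    obtain ⟨p, hp0, hpe, hex⟩ : ∃ (p : P.complex.X 0 ⟶ M) (h : P.complex.d 1 0 ≫ p = 0), Epi p ∧
        (ShortComplex.mk _ _ h).Exact :=
      ⟨P.π.f 0, P.complex_d_comp_π_f_zero, (inferInstance : Epi (P.π.f 0)), P.exact₀⟩
    constructor
    · intro h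
      have key : ∀ a : M ⟶ N, a = 0 := by
        intro a
        obtain ⟨y, hy⟩ := h (p ≫ a) (by
          change P.complex.d 1 0 ≫ (p ≫ a) = 0
          rw [reassoc_of% hp0, Limits.zero_comp])
        have : (P.complex.linearYonedaObj R N).d 0 0 = 0 := HomologicalComplex.shape _ _ _ (by simp)
        have h3 : p ≫ a = 0 := by
          rw [← hy]
          change (P.complex.linearYonedaObj R N).d 0 0 y = 0
          rw [this]; rfl
        rw [← cancel_epi p, h3, Limits.comp_zero]
      exact subsingleton_of_forall_eq 0 key
    · intro h x hx
      have hx' : P.complex.d 1 0 ≫ (x : P.complex.X 0 ⟶ N) = 0 := hx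
      refine ⟨0, ?_⟩
      rw [map_zero]
      have : Epi (ShortComplex.mk _ _ hp0).g := hpe
      have e := hex.g_desc (x : P.complex.X 0 ⟶ N) hx'
      have e0 : hex.desc (x : P.complex.X 0 ⟶ N) hx' = 0 := Subsingleton.elim (α := (M ⟶ N)) _ _
      rw [e0, Limits.comp_zero] at e
      exact e
  | succ i =>
    rw [HomologicalComplex.exactAt_iff' _ i (i+1) (i+2) (by simp) (by simp),
      ShortComplex.moduleCat_exact_iff]
    constructor
    · intro h
      refine subsingleton_of_forall_eq 0 fun α => ?_
      obtain ⟨f, hf, rfl⟩ := P.extMk_surjective α (i+2) rfl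
      rw [P.extMk_eq_zero_iff f (i+2) rfl hf i rfl]
      exact h f hf
    · intro h x hx
      have := (P.extMk_eq_zero_iff x (i+2) rfl hx i rfl).1 (by
        have := h; unfold EV at this; exact Subsingleton.elim _ _)
      exact this

variable {A B C M N W : Type u} [AddCommGroup A] [AddCommGroup B] [AddCommGroup C] [AddCommGroup M]
  [AddCommGroup N] [AddCommGroup W] [Module R A] [Module R B] [Module R C] [Module R M]
  [Module R N] [Module R W]

/-- short exact sequence -/
structure Ses (f : A →ₗ[R] B) (g : B →ₗ[R] C) : Prop where
  inj : Function.Injective f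
  ex : Function.Exact f g
  surj : Function.Surjective g

/-- associated short complex -/
abbrev Ses.sc {f : A →ₗ[R] B} {g : B →ₗ[R] C} (h : Ses f g) : ShortComplex (ModuleCat.{u} R) :=
  ShortComplex.mk (ModuleCat.ofHom f) (ModuleCat.ofHom g) (by
    ext x; exact h.ex.apply_apply_eq_zero x)

lemma Ses.se {f : A →ₗ[R] B} {g : B →ₗ[R] C} (h : Ses f g) : h.sc.ShortExact where
  exact := by
    rw [ShortComplex.moduleCat_exact_iff]
    intro x hx
    exact (h.ex x).1 hx
  mono_f := (ModuleCat.mono_iff_injective _).2 h.inj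
  epi_g := (ModuleCat.epi_iff_surjective _).2 h.surj

open Abelian

lemma EV.eq0 {i : ℕ} (h : EV R M N i) (x : Ext (ModuleCat.of R M) (ModuleCat.of R N) i) : x = 0 :=
  (h : Subsingleton _).elim _ _

lemma EV.mk' {i : ℕ} (h : ∀ x : Ext (ModuleCat.of R M) (ModuleCat.of R N) i, x = 0) : EV R M N i :=
  subsingleton_of_forall_eq 0 h

section
variable {f : A →ₗ[R] B} {g : B →ₗ[R] C} (S : Ses f g) {i : ℕ}
include S

lemma Ses.c1 (hA : EV R W A i) (hC : EV R W C i) : EV R W B i := EV.mk' fun x => by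
  obtain ⟨y, rfl⟩ := Ext.covariant_sequence_exact₂ (X := ModuleCat.of R W) S.se x (hC.eq0 _)
  rw [hA.eq0 y, Ext.zero_comp]

lemma Ses.c2 (hB : EV R W B i) (hA : EV R W A (i+1)) : EV R W C i := EV.mk' fun x => by
  obtain ⟨y, rfl⟩ := Ext.covariant_sequence_exact₃ (X := ModuleCat.of R W) S.se x rfl (hA.eq0 _)
  rw [hB.eq0 y, Ext.zero_comp]

lemma Ses.c3 (hC : EV R W C i) (hB : EV R W B (i+1)) : EV R W A (i+1) := EV.mk' fun x => by
  obtain ⟨y, rfl⟩ := Ext.covariant_sequence_exact₁ (X := ModuleCat.of R W) S.se x (hB.eq0 _) rfl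
  rw [hC.eq0 y, Ext.zero_comp]

lemma Ses.d1 (hA : EV R A N i) (hC : EV R C N i) : EV R B N i := EV.mk' fun x => by
  obtain ⟨y, rfl⟩ := Ext.contravariant_sequence_exact₂ S.se (Y := ModuleCat.of R N) x (hA.eq0 _)
  rw [hC.eq0 y, Ext.comp_zero]

lemma Ses.d2 (hB : EV R B N (i+1)) (hA : EV R A N i) : EV R C N (i+1) := EV.mk' fun x => by
  obtain ⟨y, rfl⟩ := Ext.contravariant_sequence_exact₃ S.se (Y := ModuleCat.of R N) x (hB.eq0 _)
    (add_comm _ _)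
  rw [hA.eq0 y, Ext.comp_zero]

lemma Ses.d3 (hB : EV R B N i) (hC : EV R C N (i+1)) : EV R A N i := EV.mk' fun x => by
  obtain ⟨y, rfl⟩ := Ext.contravariant_sequence_exact₁ S.se (Y := ModuleCat.of R N) x
    (add_comm 1 i) (hC.eq0 _)
  rw [hB.eq0 y, Ext.comp_zero]

/-- monomorphic restriction in degree zero -/
lemma Ses.extend (hC : EV R C N 1) (φ : A →ₗ[R] N) : ∃ ψ : B →ₗ[R] N, ψ ∘ₗ f = φ := by
  obtain ⟨y, hy⟩ := Ext.contravariant_sequence_exact₁ S.se (Y := ModuleCat.of R N)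
    (Ext.mk₀ (ModuleCat.ofHom φ)) rfl (hC.eq0 _)
  obtain ⟨ψ, rfl⟩ := (Ext.mk₀_bijective _ _).2 y
  rw [Ext.mk₀_comp_mk₀] at hy
  have := (Ext.mk₀_bijective _ _).1 hy
  exact ⟨ψ.hom, by simpa using congrArg ModuleCat.Hom.hom this⟩

lemma Ses.lift (hA : EV R W A 1) (φ : W →ₗ[R] C) : ∃ ψ : W →ₗ[R] B, g ∘ₗ ψ = φ := by
  obtain ⟨y, hy⟩ := Ext.covariant_sequence_exact₃ (X := ModuleCat.of R W) S.se
    (Ext.mk₀ (ModuleCat.ofHom φ)) rfl (hA.eq0 _)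
  obtain ⟨ψ, rfl⟩ := (Ext.mk₀_bijective _ _).2 y
  rw [Ext.mk₀_comp_mk₀] at hy
  have := (Ext.mk₀_bijective _ _).1 hy
  exact ⟨ψ.hom, by simpa using congrArg ModuleCat.Hom.hom this⟩

lemma Ses.ev_one (hB : EV R B N 1) (h : ∀ φ : A →ₗ[R] N, ∃ ψ : B →ₗ[R] N, ψ ∘ₗ f = φ) :
    EV R C N 1 := EV.mk' fun x => by
  obtain ⟨y, rfl⟩ := Ext.contravariant_sequence_exact₃ S.se (Y := ModuleCat.of R N) x (hB.eq0 _)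
    (add_zero 1)
  obtain ⟨φ, rfl⟩ := (Ext.mk₀_bijective _ _).2 y
  obtain ⟨ψ, hψ⟩ := h φ.hom
  have : φ = ModuleCat.ofHom f ≫ ModuleCat.ofHom ψ := by
    ext1; rw [← hψ]; rfl
  rw [this, ← Ext.mk₀_comp_mk₀]
  exact S.se.extClass_comp_assoc _

end

lemma ev_proj [Module.Projective R M] (i : ℕ) : EV R M N (i+1) := EV.mk' fun x => by
  have : Projective (ModuleCat.of R M) := (IsProjective.iff_projective _).1 inferInstance
  exact Ext.eq_zero_of_projective x

lemma ev_zero : EV R M N 0 ↔ Subsingleton (M →ₗ[R] N) :=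
  (Ext.homEquiv₀.trans ModuleCat.homEquiv).subsingleton_congr

/-- retract in the second variable -/
lemma EV.retract {i : ℕ} (h : EV R W M i) (s : N →ₗ[R] M) (r : M →ₗ[R] N)
    (hrs : r ∘ₗ s = LinearMap.id) : EV R W N i := EV.mk' fun x => by
  have h1 : x = x.comp (Ext.mk₀ (ModuleCat.ofHom s ≫ ModuleCat.ofHom r)) (add_zero i) := by
    rw [← ModuleCat.ofHom_comp, hrs]
    exact (Ext.comp_mk₀_id x).symm
  rw [h1, ← Ext.mk₀_comp_mk₀, ← Ext.comp_assoc_of_second_deg_zero, h.eq0 (x.comp _ _), Ext.zero_comp]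

lemma EV.retract_left {i : ℕ} (h : EV R M W i) (s : N →ₗ[R] M) (r : M →ₗ[R] N)
    (hrs : r ∘ₗ s = LinearMap.id) : EV R N W i := EV.mk' fun x => by
  have h1 : x = (Ext.mk₀ (ModuleCat.ofHom s ≫ ModuleCat.ofHom r)).comp x (zero_add i) := by
    rw [← ModuleCat.ofHom_comp, hrs]
    exact (Ext.mk₀_id_comp x).symm
  rw [h1, ← Ext.mk₀_comp_mk₀_assoc, h.eq0 (Ext.comp _ x _), Ext.comp_zero]

lemma EV.congr_left {i : ℕ} (h : EV R M W i) (e : M ≃ₗ[R] N) : EV R N W i :=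
  h.retract_left (e.symm : N →ₗ[R] M) (e : M →ₗ[R] N) (by ext; simp)

lemma EV.congr_right {i : ℕ} (h : EV R W M i) (e : M ≃ₗ[R] N) : EV R W N i :=
  h.retract (e.symm : N →ₗ[R] M) (e : M →ₗ[R] N) (by ext; simp)

lemma ses_ker {f : B →ₗ[R] C} (hf : Function.Surjective f) : Ses (LinearMap.ker f).subtype f :=
  ⟨Subtype.val_injective, LinearMap.exact_subtype_ker_map f, hf⟩

lemma ses_sub (P : Submodule R B) : Ses P.subtype P.mkQ :=
  ⟨Subtype.val_injective, LinearMap.exact_subtype_mkQ P, P.mkQ_surjective⟩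

lemma ses_prod : Ses (LinearMap.inl R M N) (LinearMap.snd R M N) :=
  ⟨LinearMap.inl_injective, Function.Exact.inl_snd, LinearMap.snd_surjective⟩

lemma EV.prod {i : ℕ} (h1 : EV R W M i) (h2 : EV R W N i) : EV R W (M × N) i :=
  ses_prod.c1 h1 h2

lemma Ses.smul_ann {x : R} {q : M →ₗ[R] C} (S : Ses (LinearMap.lsmul R M x) q) {i : ℕ}
    (hx : x ∈ Module.annihilator R W) (h : EV R W C i) : EV R W M (i+1) := EV.mk' fun y => by
  have e : ModuleCat.ofHom (LinearMap.lsmul R M x) = x • 𝟙 (ModuleCat.of R M) := rfl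
  have e2 : x • 𝟙 (ModuleCat.of R W) = 0 := by
    simp [← ModuleCat.lsmul_eq_smul_id, Module.mem_annihilator_iff_lsmul_eq_zero.mp hx]
  have h0 : x • y = 0 := by
    have : x • y = (Ext.mk₀ (x • 𝟙 (ModuleCat.of R W))).comp y (zero_add _) := by
      simp [Ext.mk₀_smul]
    rw [this, e2]; simp
  obtain ⟨z, rfl⟩ := Ext.covariant_sequence_exact₁ (X := ModuleCat.of R W) S.se y (by
    change y.comp (Ext.mk₀ (ModuleCat.ofHom (LinearMap.lsmul R M x))) _ = 0
    rw [e, ← Ext.smul_eq_comp_mk₀, h0]) rfl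
  rw [h.eq0 z, Ext.zero_comp]

lemma Ses.smul_nak [IsNoetherianRing R] [IsLocalRing R] [Module.Finite R M] [Module.Finite R N]
    {x : R} (hx : x ∈ maximalIdeal R) {q : M →ₗ[R] C} (S : Ses (LinearMap.lsmul R M x) q) {i : ℕ}
    (h : EV R C N (i+1)) : EV R M N i := by
  have e : ModuleCat.ofHom (LinearMap.lsmul R M x) = x • 𝟙 (ModuleCat.of R M) := rfl
  have key : ∀ y : Ext (ModuleCat.of R M) (ModuleCat.of R N) i, ∃ z, x • z = y := by
    intro y
    obtain ⟨z, hz⟩ := Ext.contravariant_sequence_exact₁ S.se (Y := ModuleCat.of R N) y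
      (add_comm 1 i) (h.eq0 _)
    refine ⟨z, ?_⟩
    rw [← hz]
    change _ = (Ext.mk₀ (ModuleCat.ofHom (LinearMap.lsmul R M x))).comp z _
    rw [e]; simp [Ext.mk₀_smul]
  have fin : Module.Finite R (Ext (ModuleCat.of R M) (ModuleCat.of R N) i) := inferInstance
  have : (⊤ : Submodule R (Ext (ModuleCat.of R M) (ModuleCat.of R N) i)) = ⊥ := by
    refine Submodule.eq_bot_of_le_smul_of_le_jacobson_bot (maximalIdeal R) _ fin.fg_top ?_ ?_
    · intro y _
      obtain ⟨z, rfl⟩ := key y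
      exact Submodule.smul_mem_smul hx trivial
    · exact IsLocalRing.maximalIdeal_le_jacobson _
  refine EV.mk' fun y => ?_
  have : y ∈ (⊤ : Submodule R (Ext (ModuleCat.of R M) (ModuleCat.of R N) i)) := trivial
  simpa [*] using this

end S12
end Chunk1

section Chunk2
open CategoryTheory IsLocalRing
open scoped Pointwise
set_option linter.unusedSectionVars false

namespace S12
section Gor
variable {R : Type u} [CommRing R] [IsNoetherianRing R] [IsLocalRing R]

lemma ann_k : Module.annihilator R (ResidueField R) = maximalIdeal R :=
  Ideal.annihilator_quotient

instance simple_k : IsSimpleModule R (ResidueField R) :=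
  (isSimpleModule_iff_quot_maximal).2 ⟨maximalIdeal R, inferInstance, ⟨LinearEquiv.refl _ _⟩⟩

instance finite_k : Module.Finite R (ResidueField R) :=
  inferInstanceAs (Module.Finite R (R ⧸ maximalIdeal R))

lemma ses_smul {M : Type u} [AddCommGroup M] [Module R M] {x : R} (hx : IsSMulRegular M x) :
    Ses (LinearMap.lsmul R M x) (x • (⊤ : Submodule R M)).mkQ :=
  ⟨hx, LinearMap.exact_lsmul_mkQ_smul_top M x, Submodule.mkQ_surjective _⟩

lemma exists_reg {M : Type u} [AddCommGroup M] [Module R M] [Module.Finite R M]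
    (h : EV R (ResidueField R) M 0) : ∃ x ∈ maximalIdeal R, IsSMulRegular M x := by
  rw [ev_zero, IsSMulRegular.subsingleton_linearMap_iff, ann_k] at h
  exact h

/-- Gorenstein data -/
structure GD (R : Type u) [CommRing R] [IsLocalRing R] (n : ℕ) : Prop where
  van : ∀ (M : Type u) [AddCommGroup M] [Module R M] [Module.Finite R M] (i : ℕ), n < i → EV R M R i
  ne : ¬ EV R (ResidueField R) R n

variable {n : ℕ}

/-- if `Ext^n(k,R)=0` and injective dimension `≤ n`, then `Ext^n(-,R) = 0` -/
lemma van_step (h : ∀ (M : Type u) [AddCommGroup M] [Module R M] [Module.Finite R M] (i : ℕ),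
      n < i → EV R M R i) (hk : EV R (ResidueField R) R n)
    (M : Type u) [AddCommGroup M] [Module R M] [Module.Finite R M] : EV R M R n := by
  refine IsNoetherianRing.induction_on_isQuotientEquivQuotientPrime R (M := M) inferInstance
    (motive := fun N _ _ _ => EV R N R n) ?_ ?_ ?_
  · intro N _ _ _ _
    exact (EV.retract_left (M := PUnit.{u+1}) (by
      cases n with
      | zero => rw [ev_zero]; infer_instance
      | succ n => exact ev_proj n) 0 0 (Subsingleton.elim _ _))
  · intro N _ _ _ p e
    refine EV.congr_left ?_ e.symm
    by_cases hp : p.1 = maximalIdeal R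
    · rw [hp]; exact hk
    · have : ∃ x ∈ maximalIdeal R, x ∉ p.1 := by
        by_contra! hcon
        exact hp ((le_maximalIdeal p.2.ne_top).antisymm hcon)
      obtain ⟨x, hx, hxp⟩ := this
      have reg : IsSMulRegular (R ⧸ p.1) x := by
        have := p.2
        intro a b hab
        have h2 : (Ideal.Quotient.mk p.1 x) * a = (Ideal.Quotient.mk p.1 x) * b := hab
        refine mul_left_cancel₀ ?_ h2
        rwa [Ne, Ideal.Quotient.eq_zero_iff_mem]
      exact (ses_smul reg).smul_nak hx (h _ _ (Nat.lt_succ_self n))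
  · intro N₁ _ _ _ N₂ _ _ _ N₃ _ _ _ f g hf hg he h1 h3
    exact (Ses.mk hf he hg).d1 h1 h3

lemma exists_GD (hG : IsGorensteinLocalRing R) : ∃ n, GD R n := by
  classical
  have hG' : ∃ n : ℕ, ∀ (M : Type u) [AddCommGroup M] [Module R M] [Module.Finite R M] (i : ℕ),
      n < i → EV R M R i := by
    obtain ⟨n, hn⟩ := hG
    exact ⟨n, fun M _ _ _ i hi => (extVanish_iff _ _ _).1 (hn (ModuleCat.of R M) ‹_› i hi)⟩
  refine ⟨Nat.find hG', Nat.find_spec hG', fun hk => ?_⟩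
  have key := van_step (Nat.find_spec hG') hk
  rcases hn : Nat.find hG' with _ | m
  · rw [hn] at key
    have := key R
    rw [ev_zero] at this
    have h1 : (LinearMap.id : R →ₗ[R] R) = 0 := Subsingleton.elim _ _
    exact one_ne_zero (congrArg (fun f => f 1) h1)
  · refine Nat.find_min hG' (m := m) (by omega) fun M _ _ _ i hi => ?_
    rcases (Nat.succ_le_of_lt hi).eq_or_lt with h | h
    · subst h; have := key M; rwa [hn] at this
    · exact Nat.find_spec hG' M i (by omega)

lemma GD.hom_zero (D : GD R n) {M : Type u} [AddCommGroup M] [Module R M] [Module.Finite R M]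
    (h : EV R M R n) : EV R (ResidueField R) M 0 := by
  rw [ev_zero]
  refine subsingleton_of_forall_eq 0 fun φ => ?_
  by_contra hφ
  have inj := φ.injective_or_eq_zero.resolve_right hφ
  have S : Ses φ (LinearMap.range φ).mkQ := ⟨inj, LinearMap.exact_map_mkQ_range φ, Submodule.mkQ_surjective _⟩
  exact D.ne (S.d3 h (D.van _ _ (Nat.lt_succ_self n)))

lemma GD.depth (D : GD R n) (j : ℕ) : ∀ (s : ℕ) (M : Type u) [AddCommGroup M] [Module R M]
    [Module.Finite R M], s + j < n → (∀ i, s < i → EV R M R i) → EV R (ResidueField R) M j := by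
  induction j with
  | zero =>
    intro s M _ _ _ hs h
    exact D.hom_zero (h n (by omega))
  | succ j ih =>
    intro s M _ _ _ hs h
    obtain ⟨x, hx, reg⟩ := exists_reg (D.hom_zero (h n (by omega)))
    refine (ses_smul reg).smul_ann (by rwa [ann_k]) (ih (s+1) _ (by omega) fun i hi => ?_)
    obtain ⟨i, rfl⟩ : ∃ i', i = i' + 1 := ⟨i - 1, by omega⟩
    exact (ses_smul reg).d2 (h _ (by omega)) (h _ (by omega))

lemma GD.of_depth (D : GD R n) (s : ℕ) : ∀ (W : Type u) [AddCommGroup W] [Module R W]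
    [Module.Finite R W], (∀ j < s, EV R (ResidueField R) W j) → ∀ i, n < i + s → EV R W R i := by
  induction s with
  | zero => intro W _ _ _ _ i hi; exact D.van W i hi
  | succ s ih =>
    intro W _ _ _ h i hi
    obtain ⟨x, hx, reg⟩ := exists_reg (h 0 (by omega))
    refine (ses_smul reg).smul_nak hx (ih _ (fun j hj => ?_) (i+1) (by omega))
    exact (ses_smul reg).c2 (h j (by omega)) (h (j+1) (by omega))

lemma GD.depthR (D : GD R n) : ∀ j < n, EV R (ResidueField R) R j := fun j hj =>
  D.depth j 0 R (by omega) fun i hi => by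
    obtain ⟨i, rfl⟩ : ∃ i', i = i' + 1 := ⟨i - 1, by omega⟩
    exact ev_proj i

lemma GD.dim (D : GD R n) : ringKrullDim R = n := by
  have lt : maximalIdeal R • (⊤ : Submodule R R) < ⊤ := by
    simpa using (Ideal.IsPrime.ne_top inferInstance : maximalIdeal R ≠ ⊤).lt_top
  have t1 := (ModuleCat.exists_isRegular_tfae (maximalIdeal R) n (ModuleCat.of R R) lt).out 2 3
  obtain ⟨rs, hlen, hmem, hreg⟩ := t1.1 ⟨ModuleCat.of R (ResidueField R),
      inferInstanceAs (Nontrivial (ResidueField R)), finite_k, by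
        change Module.support R (ResidueField R) = _
        rw [Module.support_eq_zeroLocus, ann_k], D.depthR⟩
  have hle : Ideal.ofList rs ≤ maximalIdeal R := Ideal.span_le.2 hmem
  have lt' : Ideal.ofList rs • (⊤ : Submodule R R) < ⊤ :=
    lt_of_le_of_lt (Submodule.smul_mono_left hle) lt
  have t2 := (ModuleCat.exists_isRegular_tfae (Ideal.ofList rs) n (ModuleCat.of R R) lt').out 0 3
  have hsupp := t2.2 ⟨rs, hlen, fun r hr => Ideal.subset_span hr, hreg⟩
  have hmax : ∀ p : Ideal R, p.IsPrime → Ideal.ofList rs ≤ p → p = maximalIdeal R := by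
    intro p hp hrp
    by_contra hne
    have : ∃ x ∈ maximalIdeal R, x ∉ p := by
      by_contra! hcon
      exact hne ((le_maximalIdeal hp.ne_top).antisymm hcon)
    obtain ⟨x, hx, hxp⟩ := this
    have reg : IsSMulRegular (R ⧸ p) x := by
      intro a b hab
      have h2 : (Ideal.Quotient.mk p x) * a = (Ideal.Quotient.mk p x) * b := hab
      refine mul_left_cancel₀ ?_ h2
      rwa [Ne, Ideal.Quotient.eq_zero_iff_mem]
    have h1 : EV R (R ⧸ p) R n := (ses_smul reg).smul_nak hx (D.van _ _ (Nat.lt_succ_self n))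
    have hle2 : p ≤ LinearMap.ker (maximalIdeal R).mkQ := by
      rw [Submodule.ker_mkQ]; exact le_maximalIdeal hp.ne_top
    let π : (R ⧸ p) →ₗ[R] ResidueField R := p.liftQ (maximalIdeal R).mkQ hle2
    have hπ : Function.Surjective π := by
      intro y
      obtain ⟨r, rfl⟩ := (maximalIdeal R).mkQ_surjective y
      exact ⟨p.mkQ r, rfl⟩
    apply D.ne
    rcases n with _ | m
    · rw [ev_zero] at h1 ⊢
      refine subsingleton_of_forall_eq 0 fun φ => ?_
      have : φ ∘ₗ π = 0 := Subsingleton.elim _ _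
      ext y
      obtain ⟨z, rfl⟩ := hπ y
      exact congrArg (fun f => f z) this
    · refine (ses_ker hπ).d2 h1 ?_
      rcases subsingleton_or_nontrivial (LinearMap.ker π) with hs | hs
      · exact (EV.retract_left (M := PUnit.{u+1}) (by
          cases m with
          | zero => rw [ev_zero]; infer_instance
          | succ n => exact ev_proj n) 0 0 (Subsingleton.elim _ _))
      · refine hsupp (ModuleCat.of R (LinearMap.ker π)) hs inferInstance ?_ m (Nat.lt_succ_self m)
        change Module.support R (LinearMap.ker π) ⊆ _
        rw [Module.support_eq_zeroLocus]
        refine PrimeSpectrum.zeroLocus_anti_mono ?_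
        intro r hr
        refine Module.mem_annihilator.2 fun y => Subtype.ext ?_
        obtain ⟨z, hz⟩ := Ideal.Quotient.mk_surjective y.1
        change r • y.1 = 0
        rw [← hz]
        change Ideal.Quotient.mk p (r * z) = 0
        rw [Ideal.Quotient.eq_zero_iff_mem]
        exact p.mul_mem_right _ (hrp hr)
  have h := ringKrullDim_add_length_eq_ringKrullDim_of_isRegular rs hreg
  have h0 : ringKrullDim (R ⧸ Ideal.ofList rs) = 0 := by
    have : Nontrivial (R ⧸ Ideal.ofList rs) :=
      Ideal.Quotient.nontrivial_iff.2 (hle.trans_lt (by simpa using lt)).ne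
    have : Ring.KrullDimLE 0 (R ⧸ Ideal.ofList rs) := by
      rw [Ring.krullDimLE_zero_iff]
      intro q hq
      have hc : q.comap (Ideal.Quotient.mk (Ideal.ofList rs)) = maximalIdeal R :=
        hmax _ (Ideal.comap_isPrime _ _) (by
          intro r hr
          rw [Ideal.mem_comap, Ideal.Quotient.eq_zero_iff_mem.2 hr]; exact zero_mem _)
      have : (q.comap (Ideal.Quotient.mk (Ideal.ofList rs))).IsMaximal := by
        rw [hc]; infer_instance
      have h3 := Ideal.IsMaximal.map_of_surjective_of_ker_le (f := Ideal.Quotient.mk (Ideal.ofList rs)) Ideal.Quotient.mk_surjective (m := q.comap (Ideal.Quotient.mk (Ideal.ofList rs))) (by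
          intro r hr; exact Ideal.mem_comap.2 (by rw [(RingHom.mem_ker).1 hr]; exact zero_mem _))
      rwa [Ideal.map_comap_of_surjective _ Ideal.Quotient.mk_surjective] at h3
    exact ringKrullDimZero_iff_ringKrullDim_eq_zero.1 this
  rw [h0, zero_add, hlen] at h
  exact h.symm
end Gor
end S12
end Chunk2

section Chunk3
open CategoryTheory IsLocalRing
open scoped Pointwise
set_option linter.unusedSectionVars false

namespace S12
section MCM
variable {R : Type u} [CommRing R] [IsNoetherianRing R] [IsLocalRing R] {n : ℕ}

lemma isMCM_iff (hd : ringKrullDim R = n) (W : ModuleCat.{u} R) :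
    IsMCM R W ↔ ∀ j < n, EV R (ResidueField R) W j := by
  unfold IsMCM moduleDepth
  rw [hd]
  have e : ((n : ℕ) : WithBot ℕ∞) = ((n : ℕ∞) : WithBot ℕ∞) := rfl
  rw [e, WithBot.coe_le_coe]
  constructor
  · intro h j hj
    by_contra hcon
    have h2 : (n : ℕ∞) ≤ j := h.trans (sInf_le ⟨j, fun hv => hcon ((extVanish_iff _ _ _).1 hv), rfl⟩)
    exact absurd (Nat.cast_le.1 h2) (by omega)
  · intro h
    refine le_sInf ?_
    rintro _ ⟨j, hj, rfl⟩
    by_contra hcon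
    exact hj ((extVanish_iff _ _ _).2 (h j (by simpa using hcon)))

lemma backward (D : GD R n) (hn : 0 < n) {𝒳 : Set (ModuleCat.{u} R)} (h𝒳 : IsResolving R 𝒳)
    (hM : ∀ M ∈ 𝒳, IsMCM R M) :
    ∃ C : ModuleCat.{u} R, Module.Finite R C ∧ MemCC R 𝒳 C ∧ C ∉ 𝒳 := by
  obtain ⟨x, hx, reg⟩ := exists_reg (D.depthR 0 hn)
  have S := ses_smul reg
  have hR : ModuleCat.of R R ∈ 𝒳 := h𝒳.freeMem _ (inferInstanceAs (Module.Finite R R))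
    (inferInstanceAs (Module.Free R R))
  refine ⟨ModuleCat.of R (R ⧸ (x • (⊤ : Submodule R R))),
    inferInstanceAs (Module.Finite R (R ⧸ (x • (⊤ : Submodule R R)))),
    ⟨ModuleCat.of R R, ModuleCat.of R R, LinearMap.lsmul R R x, (x • (⊤ : Submodule R R)).mkQ,
      hR, hR, ?_⟩, ?_⟩
  · intro W hW
    have hfin := h𝒳.finite W hW
    have ev : EV R W R 1 := D.of_depth n W ((isMCM_iff D.dim W).1 (hM W hW)) 1 (by omega)
    refine ⟨fun φ => S.lift ev φ, fun φ => ⟨fun h => ?_, ?_⟩⟩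
    · have hex : ∀ w, ∃ r : R, x * r = φ w := fun w =>
        (S.ex (φ w)).1 (congrArg (fun f => f w) h)
      choose ψ hψ using hex
      refine ⟨{ toFun := ψ, map_add' := fun a b => reg ?_, map_smul' := fun c a => reg ?_ }, ?_⟩
      · change x * ψ (a + b) = x * (ψ a + ψ b)
        rw [mul_add, hψ, hψ, hψ, map_add]
      · change x * ψ (c • a) = x * (c * ψ a)
        rw [mul_left_comm, hψ, hψ, map_smul]; rfl
      · ext w; exact hψ w
    · rintro ⟨ψ, rfl⟩
      ext w
      exact S.ex.apply_apply_eq_zero (ψ w)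
  · intro hC
    have h1 := (isMCM_iff D.dim _).1 (hM _ hC) (n-1) (by omega)
    have h2 := S.smul_ann (W := ResidueField R) (by rwa [ann_k]) h1
    rw [Nat.sub_add_cancel hn] at h2
    exact D.ne h2
end MCM
end S12
end Chunk3

section Chunk4
open CategoryTheory IsLocalRing
open scoped Pointwise
set_option linter.unusedSectionVars false
set_option linter.overlappingInstances false

namespace S12
section Hensel
variable {R : Type u} [CommRing R] [IsLocalRing R] [HenselianLocalRing R]

lemma etale_lift {S : Type u} [CommRing S] [Algebra R S] [Algebra.Etale R S]
    (φ : S →ₐ[R] ResidueField R) : ∃ ψ : S →ₐ[R] R, ∀ s, residue R (ψ s) = φ s := by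
  have hQ : (RingHom.ker φ).IsPrime := RingHom.ker_isPrime φ
  obtain ⟨f, hf, hst⟩ := Algebra.IsEtaleAt.exists_isStandardEtale (R := R) (RingHom.ker φ)
  obtain ⟨⟨P⟩⟩ := hst
  have hfu : IsUnit (φ f) := by
    rw [isUnit_iff_ne_zero]; exact hf
  let φ' : Localization.Away f →ₐ[R] ResidueField R := IsLocalization.Away.liftAlgHom f (f := φ) hfu
  have hφ' : ∀ s, φ' (algebraMap S _ s) = φ s := fun s => by
    simp [φ', IsLocalization.Away.liftAlgHom]
  have hm := P.hasMap.map φ'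
  have hd := hm.isUnit_derivative_f
  obtain ⟨a₀, ha₀⟩ := residue_surjective (φ' P.x)
  have hev : ∀ (q : Polynomial R) (r : R), residue R (q.eval r) = Polynomial.aeval (residue R r) q := by
    intro q r
    rw [← Polynomial.coe_aeval_eq_eval]
    exact (Polynomial.aeval_algebraMap_apply (ResidueField R) r q).symm
  obtain ⟨a, ha, haa⟩ := HenselianLocalRing.is_henselian P.f P.monic_f a₀
    (by rw [← residue_eq_zero_iff, hev, ha₀]; exact hm.1)
    (by
      rw [← residue_ne_zero_iff_isUnit, hev, ha₀]; exact hd.ne_zero)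
  have har : residue R a = φ' P.x := by
    rw [← ha₀, ← sub_eq_zero, ← map_sub, residue_eq_zero_iff]; exact haa
  have hma : P.P.HasMap a := by
    refine ⟨by simpa using ha, ?_⟩
    rw [Polynomial.coe_aeval_eq_eval, ← residue_ne_zero_iff_isUnit, hev, har]
    exact hm.2.ne_zero
  let ψ' : Localization.Away f →ₐ[R] R := (P.lift a hma).comp P.equivRing.toAlgHom
  have hψ : (Algebra.ofId R (ResidueField R)).comp ψ' = φ' := by
    have : ((Algebra.ofId R (ResidueField R)).comp ψ').comp P.equivRing.symm.toAlgHom =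
        φ'.comp P.equivRing.symm.toAlgHom := by
      apply P.P.hom_ext
      simp [ψ', Algebra.ofId_apply]
      exact har
    refine AlgHom.ext fun s => ?_
    have := congrArg (fun f => f (P.equivRing s)) this
    simpa using this
  refine ⟨ψ'.comp (IsScalarTower.toAlgHom R S _), fun s => ?_⟩
  rw [← hφ', ← hψ]
  rfl

open Polynomial in
lemma hensel_factor (p : R[X]) (hp : p.Monic) (f₀ g₀ : (ResidueField R)[X]) (hf : f₀.Monic)
    (hg : g₀.Monic) (hcop : IsCoprime f₀ g₀) (h : p.map (residue R) = f₀ * g₀) :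
    ∃ g h : R[X], g.Monic ∧ h.Monic ∧ p = g * h ∧ IsCoprime g h ∧ g.map (residue R) = f₀ ∧
      h.map (residue R) = g₀ := by
  have hdeg : p.natDegree = f₀.natDegree + g₀.natDegree := by
    rw [← hf.natDegree_mul hg, ← h, hp.natDegree_map]
  let P := MonicDegreeEq.mk p hp rfl
  let F := MonicDegreeEq.mk f₀ hf rfl
  let G := MonicDegreeEq.mk g₀ hg rfl
  let φ : UniversalCoprimeFactorizationRing f₀.natDegree g₀.natDegree hdeg P →ₐ[R] ResidueField R :=
    (UniversalCoprimeFactorizationRing.homEquiv (ResidueField R) _ _ hdeg P).symm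
      ⟨(F, G), h.symm, hcop⟩
  obtain ⟨ψ, hψ⟩ := etale_lift φ
  have hc : (Algebra.ofId R (ResidueField R)).comp ψ = φ := AlgHom.ext hψ
  have e : UniversalCoprimeFactorizationRing.homEquiv (ResidueField R) _ _ hdeg P φ =
      ⟨(F, G), h.symm, hcop⟩ := Equiv.apply_symm_apply _ _
  have e1 := UniversalCoprimeFactorizationRing.homEquiv_comp_fst R _ _ hdeg P ψ
    (Algebra.ofId R (ResidueField R))
  have e2 := UniversalCoprimeFactorizationRing.homEquiv_comp_snd R _ _ hdeg P ψ
    (Algebra.ofId R (ResidueField R))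
  rw [hc, e] at e1 e2
  generalize UniversalCoprimeFactorizationRing.homEquiv R _ _ hdeg P ψ = q at e1 e2
  obtain ⟨⟨g', h'⟩, hmul, hcop'⟩ := q
  refine ⟨g'.1, h'.1, g'.monic, h'.monic, ?_, hcop', ?_, ?_⟩
  · have := hmul.symm
    simpa [P] using this
  · exact (congrArg Subtype.val e1).symm
  · exact (congrArg Subtype.val e2).symm
end Hensel
end S12
end Chunk4

section Chunk5
open CategoryTheory IsLocalRing
open scoped Pointwise
set_option linter.unusedSectionVars false
set_option linter.overlappingInstances false

namespace S12
section Fit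
variable {R : Type u} [CommRing R] [IsLocalRing R] [HenselianLocalRing R]

open Polynomial in
lemma comp_aeval {V C : Type u} [AddCommGroup V] [Module R V] [AddCommGroup C] [Module R C]
    (e : Module.End R V) (f : V →ₗ[R] C) (h : f ∘ₗ e = f) (q : R[X]) (x : V) :
    f (aeval e q x) = q.eval 1 • f x := by
  have h' : ∀ y, f (e y) = f y := fun y => congrArg (fun F => F y) h
  induction q using Polynomial.induction_on' with
  | add p q hp hq => simp [hp, hq, add_smul]
  | monomial n a =>
    have : ∀ n, f ((e ^ n) x) = f x := by
      intro n
      induction n with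
      | zero => simp
      | succ n ih => rw [pow_succ', Module.End.mul_apply, h', ih]
    simp [aeval_monomial, this]

open Polynomial in
lemma fitting {V : Type u} [AddCommGroup V] [Module R V] [Module.Finite R V]
    (e : Module.End R V) : ∃ ρ : Module.End R V, ρ * ρ = ρ ∧
      (∀ {C : Type u} [AddCommGroup C] [Module R C] (f : V →ₗ[R] C), f ∘ₗ e = f → f ∘ₗ ρ = f) ∧
      ((∀ x, ρ x = 0 → x = 0) → Function.Bijective e) := by
  obtain ⟨p, hp, hpe⟩ := LinearMap.exists_monic_and_aeval_eq_zero R e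
  have hp0 : p.map (residue R) ≠ 0 := (hp.map _).ne_zero
  obtain ⟨q, hq, hnd⟩ := exists_eq_pow_rootMultiplicity_mul_and_not_dvd (p.map (residue R)) hp0 0
  rw [C_0, sub_zero] at hq hnd
  set a := rootMultiplicity 0 (p.map (residue R))
  have hcop : IsCoprime ((X : (ResidueField R)[X]) ^ a) q :=
    ((irreducible_X.coprime_iff_not_dvd).2 hnd).pow_left
  have hqm : q.Monic := (monic_X_pow a).of_mul_monic_left (hq ▸ hp.map _)
  obtain ⟨g, h, hg, hh, hgh, ⟨s, t, hst⟩, hgr, hhr⟩ :=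
    hensel_factor p hp _ q (monic_X_pow a) hqm hcop hq
  have eP : ∀ u : R[X], aeval e (u * (g * h)) = 0 := fun u => by rw [map_mul, ← hgh, hpe, mul_zero]
  have hidem : s * g * (s * g) = s * g - (s * t) * (g * h) := by
    linear_combination (s * g) * hst
  refine ⟨aeval e (s * g), ?_, ?_, ?_⟩
  · rw [← map_mul, hidem, map_sub, eP, sub_zero]
  · intro C _ _ f hf
    have hg1 : IsUnit (g.eval 1) := by
      rw [← residue_ne_zero_iff_isUnit, ← eval_map_apply, hgr]; simp
    have hp1 : ∀ x, h.eval 1 • f x = 0 := fun x => by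
      have h1 := comp_aeval e f hf (g * h) x
      rw [← hgh, hpe, hgh, eval_mul, mul_smul] at h1
      simp only [LinearMap.zero_apply, map_zero] at h1
      exact (hg1.smul_eq_zero).1 h1.symm
    ext x
    have h2 : aeval e (s * g) = 1 - aeval e (t * h) := by
      rw [eq_sub_iff_add_eq, ← map_add, hst, map_one]
    rw [LinearMap.comp_apply, h2, LinearMap.sub_apply, map_sub, comp_aeval e f hf, eval_mul, mul_smul,
      hp1]
    simp
  · intro hinj
    have h1 : aeval e (s * g) = 1 := by
      ext x
      rw [← sub_eq_zero]
      apply hinj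
      rw [map_sub, ← Module.End.mul_apply, ← map_mul, hidem, map_sub, eP]
      simp
    have h2 : aeval e h = 0 := by
      have : aeval e h = aeval e (s * (g * h)) := by
        rw [← mul_assoc, map_mul _ (s * g), h1, one_mul]
      rw [this, eP]
    have hh0 : IsUnit (h.coeff 0) := by
      rw [← residue_ne_zero_iff_isUnit, ← coeff_map, hhr]
      rwa [Ne, ← X_dvd_iff]
    have h3 : ∀ x, e (aeval e h.divX x) = - (h.coeff 0 • x) ∧
        aeval e h.divX (e x) = -(h.coeff 0 • x) := by
      intro x
      have k1 : aeval e (X * h.divX + C (h.coeff 0)) = 0 := by rw [X_mul_divX_add]; exact h2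
      have k2 : aeval e (h.divX * X + C (h.coeff 0)) = 0 := by rw [divX_mul_X_add]; exact h2
      have k1 := congrArg (fun F => F x) k1
      have k2 := congrArg (fun F => F x) k2
      simp [-X_mul_divX_add, Algebra.algebraMap_eq_smul_one] at k1 k2
      exact ⟨eq_neg_of_add_eq_zero_left k1, eq_neg_of_add_eq_zero_left k2⟩
    constructor
    · rw [injective_iff_map_eq_zero]
      intro x hx
      have := (h3 x).2
      rw [hx, map_zero, eq_comm, neg_eq_zero] at this
      exact (hh0.smul_eq_zero).1 this
    · intro y
      obtain ⟨c, hc⟩ := hh0.exists_right_inv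
      refine ⟨aeval e h.divX (-(c • y)), ?_⟩
      rw [(h3 _).1, smul_neg, neg_neg, smul_smul, hc, one_smul]
end Fit
end S12
end Chunk5

section Chunk6
open CategoryTheory IsLocalRing
open scoped Pointwise
set_option linter.unusedSectionVars false
set_option linter.overlappingInstances false

namespace S12
section Min
variable {R : Type u} [CommRing R] [IsNoetherianRing R] [IsLocalRing R] [HenselianLocalRing R]
variable {𝒳 : Set (ModuleCat.{u} R)}

/-- unbundled right approximation -/
structure Approx (𝒳 : Set (ModuleCat.{u} R)) {X C : Type u} [AddCommGroup X] [Module R X]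
    [AddCommGroup C] [Module R C] (f : X →ₗ[R] C) : Prop where
  mem : ModuleCat.of R X ∈ 𝒳
  fac : ∀ (W : Type u) [AddCommGroup W] [Module R W], ModuleCat.of R W ∈ 𝒳 →
    ∀ g : W →ₗ[R] C, ∃ h : W →ₗ[R] X, f ∘ₗ h = g

lemma exists_min (h𝒳 : IsResolving R 𝒳) {X C : Type u} [AddCommGroup X] [Module R X]
    [AddCommGroup C] [Module R C] {f : X →ₗ[R] C} (hf : Approx 𝒳 f) :
    ∃ (V : Submodule R X) (f' : V →ₗ[R] C), Approx 𝒳 f' ∧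
      ∀ e : V →ₗ[R] V, f' ∘ₗ e = f' → Function.Bijective e := by
  have hfin : Module.Finite R X := h𝒳.finite _ hf.mem
  let S : Set (Submodule R X) :=
    {U | ∃ π : X →ₗ[R] X, π ∘ₗ π = π ∧ f ∘ₗ π = f ∧ LinearMap.ker π = U}
  have hS : S.Nonempty := ⟨_, LinearMap.id, rfl, rfl, rfl⟩
  obtain ⟨U, ⟨π, hπ, hfπ, rfl⟩, hmax⟩ := WellFounded.has_min (wellFounded_gt (α := Submodule R X)) S hS
  have hππ : ∀ x, π (π x) = π x := fun x => congrArg (fun F => F x) hπ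
  have hfx : ∀ x, f (π x) = f x := fun x => congrArg (fun F => F x) hfπ
  have hV : ∀ v : LinearMap.range π, π v = v := by
    rintro ⟨_, x, rfl⟩; exact hππ x
  have hmem : ModuleCat.of R (LinearMap.range π) ∈ 𝒳 := by
    refine h𝒳.summandClosed (ModuleCat.of R (LinearMap.range π)) (ModuleCat.of R (LinearMap.ker π)) ?_
    refine h𝒳.isoClosed hf.mem ?_
    have hc : IsCompl (LinearMap.range π) (LinearMap.ker π) := by
      constructor
      · rw [Submodule.disjoint_def]
        intro x hx hx'
        exact (hV ⟨x, hx⟩).symm.trans hx'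
      · rw [codisjoint_iff, eq_top_iff]
        intro x _
        rw [Submodule.mem_sup]
        exact ⟨π x, ⟨x, rfl⟩, x - π x, by simp [LinearMap.mem_ker, hππ], by simp⟩
    exact (Submodule.prodEquivOfIsCompl _ _ hc).symm
  refine ⟨LinearMap.range π, f ∘ₗ (LinearMap.range π).subtype, ⟨hmem, ?_⟩, ?_⟩
  · intro W _ _ hW g
    obtain ⟨h, rfl⟩ := hf.fac W hW g
    exact ⟨π.rangeRestrict ∘ₗ h, by ext w; exact hfx _⟩
  · intro e he
    obtain ⟨ρ, h1, h2, h3⟩ := fitting e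
    apply h3
    intro v hv
    have h1x : ∀ v, ρ (ρ v) = ρ v := fun v => congrArg (fun F => F v) h1
    have h2x : ∀ v, f (ρ v) = f v := fun v => congrArg (fun F => F v) (h2 _ he)
    have hrr : ∀ v : LinearMap.range π, π.rangeRestrict (v : X) = v := fun v => Subtype.ext (hV v)
    have hle : LinearMap.ker π ≤
        LinearMap.ker ((LinearMap.range π).subtype ∘ₗ ρ ∘ₗ π.rangeRestrict) := by
      intro x hx
      have : π.rangeRestrict x = 0 := Subtype.ext hx
      simp [LinearMap.mem_ker, this]
    have hnot := hmax (LinearMap.ker ((LinearMap.range π).subtype ∘ₗ ρ ∘ₗ π.rangeRestrict))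
      ⟨_, by ext x; simp [hrr, h1x], by ext x; simp [h2x, hfx], rfl⟩
    have heq : LinearMap.ker π =
        LinearMap.ker ((LinearMap.range π).subtype ∘ₗ ρ ∘ₗ π.rangeRestrict) := by
      by_contra hne
      exact hnot (lt_of_le_of_ne hle hne)
    have : (v : X) ∈ LinearMap.ker π := by
      rw [heq, LinearMap.mem_ker]
      simp [hrr, hv]
    apply Subtype.ext
    rw [← hV v]; exact this

lemma Approx.surj (h𝒳 : IsResolving R 𝒳) {X C : Type u} [AddCommGroup X] [Module R X]
    [AddCommGroup C] [Module R C] {f : X →ₗ[R] C} (hf : Approx 𝒳 f) : Function.Surjective f := by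
  intro c
  have hR : ModuleCat.of R R ∈ 𝒳 := h𝒳.freeMem _ (inferInstanceAs (Module.Finite R R))
    (inferInstanceAs (Module.Free R R))
  obtain ⟨h, hh⟩ := hf.fac R hR (LinearMap.toSpanSingleton R C c)
  exact ⟨h 1, by simpa using congrArg (fun F => F 1) hh⟩

/-- existence of a syzygy -/
lemma exists_cover (W : Type u) [AddCommGroup W] [Module R W] [Module.Finite R W] :
    ∃ (m : ℕ) (p : (Fin m → R) →ₗ[R] W), Function.Surjective p :=
  Module.Finite.exists_fin' R W

lemma free_mem (h𝒳 : IsResolving R 𝒳) (m : ℕ) : ModuleCat.of R (Fin m → R) ∈ 𝒳 :=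
  h𝒳.freeMem _ (inferInstanceAs (Module.Finite R (Fin m → R)))
    (inferInstanceAs (Module.Free R (Fin m → R)))

lemma wakamatsu1 (h𝒳 : IsResolving R 𝒳) {X C : Type u} [AddCommGroup X] [Module R X]
    [AddCommGroup C] [Module R C] {f : X →ₗ[R] C} (hf : Approx 𝒳 f)
    (hmin : ∀ e : X →ₗ[R] X, f ∘ₗ e = f → Function.Bijective e)
    (W : Type u) [AddCommGroup W] [Module R W] (hW : ModuleCat.of R W ∈ 𝒳) :
    EV R W (LinearMap.ker f) 1 := by
  have : Module.Finite R W := h𝒳.finite _ hW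
  obtain ⟨m, p, hp⟩ := exists_cover (R := R) W
  refine (ses_ker hp).ev_one (ev_proj 0) ?_
  intro φ
  let ι : LinearMap.ker p →ₗ[R] X × (Fin m → R) :=
    LinearMap.prod ((LinearMap.ker f).subtype ∘ₗ φ) (LinearMap.ker p).subtype
  let Q := (X × (Fin m → R)) ⧸ LinearMap.range ι
  let q : X × (Fin m → R) →ₗ[R] Q := (LinearMap.range ι).mkQ
  let a : X →ₗ[R] Q := q ∘ₗ LinearMap.inl R _ _
  let b : Q →ₗ[R] W := (LinearMap.range ι).liftQ (p ∘ₗ LinearMap.snd R _ _) (by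
    rintro _ ⟨z, rfl⟩
    exact z.2)
  let c : Q →ₗ[R] C := (LinearMap.range ι).liftQ (f ∘ₗ LinearMap.fst R _ _) (by
    rintro _ ⟨z, rfl⟩
    exact (φ z).2)
  have hq0 : ∀ z, q z = 0 ↔ ∃ y, ι y = z := fun z => by
    rw [Submodule.mkQ_apply, Submodule.Quotient.mk_eq_zero]; exact Iff.rfl
  have hses : IsSES R (A := ModuleCat.of R X) (B := ModuleCat.of R Q) (C := ModuleCat.of R W) a b := by
    refine ⟨?_, ?_, ?_⟩
    · refine (injective_iff_map_eq_zero a).2 ?_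
      intro x hx
      obtain ⟨y, hy⟩ := (hq0 _).1 hx
      have h2 : (y : Fin m → R) = 0 := congrArg Prod.snd hy
      have h1 : (φ y : X) = x := congrArg Prod.fst hy
      have : y = 0 := Subtype.ext h2
      rw [← h1, this]; simp
    · intro z
      obtain ⟨⟨x, y⟩, rfl⟩ := (LinearMap.range ι).mkQ_surjective z
      constructor
      · intro h
        have hy : p y = 0 := h
        refine ⟨x - φ ⟨y, hy⟩, ?_⟩
        change q (x - φ ⟨y, hy⟩, 0) = q (x, y)
        rw [← sub_eq_zero, ← map_sub, hq0]
        refine ⟨-⟨y, hy⟩, ?_⟩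
        simp [ι]
      · rintro ⟨x', hx'⟩
        change b (q _) = 0
        have hx2 : q (x', 0) = q (x, y) := hx'
        rw [← hx2]
        change p 0 = 0
        simp
    · intro w
      obtain ⟨y, rfl⟩ := hp w
      exact ⟨q (0, y), rfl⟩
  have hQ := h𝒳.extClosed _ _ _ _ _ hses hf.mem hW
  obtain ⟨h, hh⟩ := hf.fac Q hQ c
  have hhx : ∀ z, f (h (q z)) = f z.1 := fun z => congrArg (fun F => F (q z)) hh
  have he := hmin (h ∘ₗ a) (by ext x; exact hhx (x, 0))
  let E := LinearEquiv.ofBijective (h ∘ₗ a) he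
  have hE : ∀ x, f (E.symm x) = f x := fun x => by
    have := hhx (E.symm x, 0)
    have h2 : h (q (E.symm x, 0)) = x := E.apply_symm_apply x
    rw [h2] at this; exact this.symm
  refine ⟨LinearMap.codRestrict (LinearMap.ker f)
    (-(E.symm.toLinearMap ∘ₗ h ∘ₗ q ∘ₗ LinearMap.inr R _ _)) ?_, ?_⟩
  · intro y
    rw [LinearMap.mem_ker]
    change f (-(E.symm (h (q (0, y))))) = 0
    rw [map_neg, hE, hhx]; simp
  · ext y
    change -(E.symm (h (q (0, (y : Fin m → R))))) = (φ y : X)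
    have h0 : q ((φ y : X), (y : Fin m → R)) = 0 := (hq0 _).2 ⟨y, rfl⟩
    have h1 : q ((φ y : X), 0) + q (0, (y : Fin m → R)) = 0 := by
      rw [← map_add, ← h0]; simp
    have h2 : h (q ((φ y : X), 0)) + h (q (0, (y : Fin m → R))) = 0 := by
      rw [← map_add, h1, map_zero]
    have h3 : h (q ((φ y : X), 0)) = E (φ y : X) := rfl
    rw [eq_neg_of_add_eq_zero_right h2, h3, map_neg, E.symm_apply_apply, neg_neg]

lemma syz_mem (h𝒳 : IsResolving R 𝒳) {m : ℕ} {W : Type u} [AddCommGroup W] [Module R W]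
    (hW : ModuleCat.of R W ∈ 𝒳) {p : (Fin m → R) →ₗ[R] W} (hp : Function.Surjective p) :
    ModuleCat.of R (LinearMap.ker p) ∈ 𝒳 :=
  h𝒳.kerClosed (ModuleCat.of R (LinearMap.ker p)) (ModuleCat.of R (Fin m → R)) (ModuleCat.of R W)
    (LinearMap.ker p).subtype p ⟨(ses_ker hp).inj, (ses_ker hp).ex, hp⟩ (free_mem h𝒳 m) hW

lemma wakamatsu (h𝒳 : IsResolving R 𝒳) {X C : Type u} [AddCommGroup X] [Module R X]
    [AddCommGroup C] [Module R C] {f : X →ₗ[R] C} (hf : Approx 𝒳 f)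
    (hmin : ∀ e : X →ₗ[R] X, f ∘ₗ e = f → Function.Bijective e) (i : ℕ) :
    ∀ (W : Type u) [AddCommGroup W] [Module R W], ModuleCat.of R W ∈ 𝒳 →
    EV R W (LinearMap.ker f) (i+1) := by
  induction i with
  | zero => intro W _ _ hW; exact wakamatsu1 h𝒳 hf hmin W hW
  | succ i ih =>
    intro W _ _ hW
    have : Module.Finite R W := h𝒳.finite _ hW
    obtain ⟨m, p, hp⟩ := exists_cover (R := R) W
    exact (ses_ker hp).d2 (ev_proj _) (ih _ (syz_mem h𝒳 hW hp))
end Min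
end S12
end Chunk6

section Chunk7
open CategoryTheory IsLocalRing
open scoped Pointwise
set_option linter.unusedSectionVars false
set_option linter.overlappingInstances false

namespace S12
section PD
variable {R : Type u} [CommRing R] [IsNoetherianRing R] [IsLocalRing R]

open TensorProduct in
lemma free_of_ev (Z : Type u) [AddCommGroup Z] [Module R Z] [Module.Finite R Z]
    (h : EV R Z (ResidueField R) 1) : Module.Free R Z := by
  obtain ⟨m, p, hp⟩ := Module.Finite.exists_fin' R Z
  refine Module.free_of_lTensor_residueField_injective (LinearMap.ker p).subtype p hp
    (ses_ker hp).ex ?_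
  rw [injective_iff_map_eq_zero]
  intro x hx
  rw [← Module.forall_dual_apply_eq_zero_iff (ResidueField R)]
  intro φ
  let φ₀ : LinearMap.ker p →ₗ[R] ResidueField R :=
    (φ.restrictScalars R) ∘ₗ TensorProduct.mk R (ResidueField R) _ 1
  obtain ⟨ψ, hψ⟩ := (ses_ker hp).extend h φ₀
  let Ψ : ResidueField R ⊗[R] (Fin m → R) →ₗ[ResidueField R] ResidueField R :=
    ψ.liftBaseChange (ResidueField R)
  have key : ∀ x, φ x = Ψ ((LinearMap.ker p).subtype.lTensor (ResidueField R) x) := by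
    intro x
    induction x with
    | zero => simp
    | add a b ha hb => simp only [map_add, ha, hb]
    | tmul c z =>
      have h1 : c ⊗ₜ[R] z = c • ((1 : ResidueField R) ⊗ₜ[R] z) := by
        rw [TensorProduct.smul_tmul', smul_eq_mul, mul_one]
      have h2 : ψ z = φ ((1 : ResidueField R) ⊗ₜ[R] z) := congrArg (fun F => F z) hψ
      rw [h1, map_smul, ← h2, LinearMap.lTensor, ← h1]
      simp [Ψ]
  rw [key, hx, map_zero]

lemma ev_of_k (p : ℕ) : ∀ (Z : Type u) [AddCommGroup Z] [Module R Z] [Module.Finite R Z],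
    EV R Z (ResidueField R) (p+1) → ∀ (N : Type u) [AddCommGroup N] [Module R N] (i : ℕ),
    p < i → EV R Z N i := by
  induction p with
  | zero =>
    intro Z _ _ _ h N _ _ i hi
    have := free_of_ev Z h
    obtain ⟨i, rfl⟩ : ∃ j, i = j + 1 := ⟨i - 1, by omega⟩
    exact ev_proj i
  | succ p ih =>
    intro Z _ _ _ h N _ _ i hi
    obtain ⟨m, q, hq⟩ := Module.Finite.exists_fin' R Z
    obtain ⟨i, rfl⟩ : ∃ j, i = j + 1 := ⟨i - 1, by omega⟩
    exact (ses_ker hq).d2 (ev_proj _) (ih _ ((ses_ker hq).d3 (ev_proj _) h) N i (by omega))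

lemma exists_to_k (Y : Type u) [AddCommGroup Y] [Module R Y] [Module.Finite R Y] [Nontrivial Y] :
    ∃ f : Y →ₗ[R] ResidueField R, Function.Surjective f := by
  obtain ⟨N, hN, -⟩ := (eq_top_or_exists_le_coatom (⊥ : Submodule R Y)).resolve_left bot_ne_top
  have : IsSimpleModule R (Y ⧸ N) := isSimpleModule_iff_isCoatom.2 hN
  obtain ⟨I, hI, ⟨e⟩⟩ := isSimpleModule_iff_quot_maximal.1 this
  obtain rfl := IsLocalRing.eq_maximalIdeal hI
  exact ⟨e.toLinearMap ∘ₗ N.mkQ, e.surjective.comp N.mkQ_surjective⟩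

lemma free_of_pd (Y : Type u) [AddCommGroup Y] [Module R Y] [Module.Finite R Y] [Nontrivial Y]
    (hY : ∀ i, EV R Y Y (i+1)) (p : ℕ)
    (h : ∀ (N : Type u) [AddCommGroup N] [Module R N] (i : ℕ), p < i → EV R Y N i) :
    Module.Free R Y := by
  induction p with
  | zero => exact free_of_ev Y (h _ 1 (by omega))
  | succ p ih =>
    obtain ⟨f, hf⟩ := exists_to_k (R := R) Y
    refine ih fun N _ _ i hi => ev_of_k p Y ?_ N i hi
    exact (ses_ker hf).c2 (hY p) (h _ _ (by omega))
end PD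

section Fwd
variable {R : Type u} [CommRing R] [IsNoetherianRing R] [IsLocalRing R] [HenselianLocalRing R]
variable {𝒳 : Set (ModuleCat.{u} R)} {n : ℕ}

lemma approx_ker {X X₀ X₁ C : Type u} [AddCommGroup X] [Module R X] [AddCommGroup C] [Module R C]
    [AddCommGroup X₀] [Module R X₀] [AddCommGroup X₁] [Module R X₁]
    {f : X →ₗ[R] C} (hf : Approx 𝒳 f)
    (hmin : ∀ e : X →ₗ[R] X, f ∘ₗ e = f → Function.Bijective e)
    {f₀ : X₀ →ₗ[R] C} (hf₀ : Approx 𝒳 f₀) {g : X₁ →ₗ[R] X₀} (h1 : ModuleCat.of R X₁ ∈ 𝒳)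
    (hg0 : f₀ ∘ₗ g = 0)
    (hg : ∀ (W : Type u) [AddCommGroup W] [Module R W], ModuleCat.of R W ∈ 𝒳 →
      ∀ φ : W →ₗ[R] X₀, f₀ ∘ₗ φ = 0 → ∃ h : W →ₗ[R] X₁, g ∘ₗ h = φ) :
    ∃ q : X₁ →ₗ[R] LinearMap.ker f, Approx 𝒳 q := by
  obtain ⟨s, hs⟩ := hf₀.fac X hf.mem f
  obtain ⟨r, hr⟩ := hf.fac X₀ hf₀.mem f₀
  have hsx : ∀ x, f₀ (s x) = f x := fun x => congrArg (fun F => F x) hs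
  have hrx : ∀ x, f (r x) = f₀ x := fun x => congrArg (fun F => F x) hr
  let E := LinearEquiv.ofBijective (r ∘ₗ s) (hmin (r ∘ₗ s) (by ext x; simp [hsx, hrx]))
  have hEx : ∀ x, f (E.symm x) = f x := fun x => by
    have h2 : r (s (E.symm x)) = x := E.apply_symm_apply x
    have := hrx (s (E.symm x))
    rw [h2, hsx] at this; exact this.symm
  refine ⟨LinearMap.codRestrict (LinearMap.ker f) (r ∘ₗ g) ?_, h1, ?_⟩
  · intro x
    have := congrArg (fun F => F x) hg0
    simp only [LinearMap.comp_apply, LinearMap.zero_apply] at this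
    rw [LinearMap.mem_ker, LinearMap.comp_apply, hrx, this]
  · intro W _ _ hW φ
    obtain ⟨h, hh⟩ := hg W hW (s ∘ₗ E.symm.toLinearMap ∘ₗ (LinearMap.ker f).subtype ∘ₗ φ) (by
      ext w
      simp only [LinearMap.comp_apply, LinearMap.zero_apply, hsx]
      exact (hEx _).trans (φ w).2)
    refine ⟨h, ?_⟩
    ext w
    have h3 : g (h w) = s (E.symm (φ w)) := congrArg (fun F => F w) hh
    change r (g (h w)) = φ w
    rw [h3]
    exact E.apply_symm_apply _

lemma forward (D : GD R n)
    (hGARC : ∀ M : ModuleCat.{u} R, Module.Finite R M → ∀ n : ℕ,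
      (∀ i, n < i → ExtVanish R i M (ModuleCat.of R (↥M × R))) → ProjDimLE R M n)
    (h𝒳 : IsResolving R 𝒳) (C : ModuleCat.{u} R) (hC : MemCC R 𝒳 C) (hC' : C ∉ 𝒳)
    (W : ModuleCat.{u} R) (hW : W ∈ 𝒳) : IsMCM R W := by
  obtain ⟨X₀, X₁, g, f₀, h0, h1, hex⟩ := hC
  have hf₀ : Approx 𝒳 f₀ := ⟨h0, fun W _ _ hW φ => (hex _ hW).1 φ⟩
  obtain ⟨V, f, hf, hmin⟩ := exists_min h𝒳 hf₀
  have hfs := hf.surj h𝒳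
  obtain ⟨q, hq⟩ := approx_ker hf hmin hf₀ (g := g) h1
    (((hex _ h1).2 g).2 ⟨LinearMap.id, rfl⟩)
    (fun W _ _ hW φ hφ => ((hex _ hW).2 φ).1 hφ)
  obtain ⟨Y, f', hf', hmin'⟩ := exists_min h𝒳 hq
  have hfs' := hf'.surj h𝒳
  have hK : Nontrivial (LinearMap.ker f) := by
    rw [Submodule.nontrivial_iff_ne_bot]
    intro hbot
    exact hC' (h𝒳.isoClosed hf.mem (LinearEquiv.ofBijective f ⟨LinearMap.ker_eq_bot.1 hbot, hfs⟩))
  have hYn : Nontrivial Y := hfs'.nontrivial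
  have hYf : Module.Finite R Y := h𝒳.finite _ hf'.mem
  have hWY : ∀ (W : Type u) [AddCommGroup W] [Module R W], ModuleCat.of R W ∈ 𝒳 →
      ∀ i, EV R W Y (i+1) := fun W _ _ hW i =>
    (ses_ker hfs').c1 (wakamatsu h𝒳 hf' hmin' i W hW) (wakamatsu h𝒳 hf hmin i W hW)
  have hYY := hWY Y hf'.mem
  have hpd : ProjDimLE R (ModuleCat.of R Y) n := by
    refine hGARC (ModuleCat.of R Y) hYf n fun i hi => ?_
    rw [extVanish_iff]
    obtain ⟨i, rfl⟩ : ∃ j, i = j + 1 := ⟨i - 1, by omega⟩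
    exact EV.prod (hYY i) (D.van Y _ hi)
  have hfree : Module.Free R Y := free_of_pd Y hYY n fun N _ _ i hi =>
    (extVanish_iff i (ModuleCat.of R Y) (ModuleCat.of R N)).1 (hpd (ModuleCat.of R N) i hi)
  let b := Module.Free.chooseBasis R Y
  obtain ⟨j⟩ : Nonempty (Module.Free.ChooseBasisIndex R Y) := b.index_nonempty
  rw [isMCM_iff D.dim]
  intro t ht
  have : Module.Finite R W := h𝒳.finite _ hW
  refine D.depth t 0 W (by omega) fun i hi => ?_
  obtain ⟨i, rfl⟩ : ∃ j, i = j + 1 := ⟨i - 1, by omega⟩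
  exact (hWY W hW i).retract (LinearMap.toSpanSingleton R Y (b j)) (b.coord j) (by ext; simp)
end Fwd
end S12
end Chunk7

/-- Over a henselian Gorenstein local ring of positive dimension
satisfying (GARC), `𝒳` is strictly contained in `𝒞(𝒳)` iff every module in `𝒳` is
maximal Cohen–Macaulay. -/
theorem stmt12 (R : Type u) [CommRing R] [IsNoetherianRing R] [IsLocalRing R]
    [HenselianLocalRing R] (hG : IsGorensteinLocalRing R) (hdim : 0 < ringKrullDim R)
    (hGARC : ∀ M : ModuleCat.{u} R, Module.Finite R M → ∀ n : ℕ,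
      (∀ i, n < i → ExtVanish R i M (ModuleCat.of R (↥M × R))) → ProjDimLE R M n)
    (𝒳 : Set (ModuleCat.{u} R)) (h𝒳 : IsResolving R 𝒳) :
    (∃ C : ModuleCat.{u} R, Module.Finite R C ∧ MemCC R 𝒳 C ∧ C ∉ 𝒳) ↔
      ∀ M ∈ 𝒳, IsMCM R M := by
  obtain ⟨n, D⟩ := S12.exists_GD hG
  have hn : 0 < n := by
    rw [D.dim] at hdim
    exact_mod_cast hdim
  constructor
  · rintro ⟨C, -, hC, hC'⟩ W hW
    exact S12.forward D hGARC h𝒳 C hC hC' W hW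
  · intro h
    exact S12.backward D hn h𝒳 h
end

section
/- Let R be a henselian Gorenstein Noetherian local ring and 𝒳 a resolving subcategory of the category of finitely generated R-modules. Then 𝒳 is coherent if and only if rap 𝒳 is closed under kernels of surjections, i.e. for every short exact sequence 0 → A → B → C → 0 of finitely generated R-modules with B and C admitting right 𝒳-approximations, A also admits a right 𝒳-approximation. -/
open CategoryTheory IsLocalRing

universe u

section Hensel
open Polynomial

theorem hens_section (R : Type u) [CommRing R] [HenselianLocalRing R] (A : Type u) [CommRing A]
    [Algebra R A] [Algebra.Etale R A] (φ : A →ₐ[R] ResidueField R) :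
    ∃ s : A →ₐ[R] R, (Algebra.ofId R (ResidueField R)).comp s = φ := by
  let Q : Ideal A := RingHom.ker φ.toRingHom
  have hQ : Q.IsPrime := RingHom.ker_isPrime _
  obtain ⟨f, hf, ⟨⟨P⟩⟩⟩ := Algebra.IsEtaleAt.exists_isStandardEtale (R := R) Q
  have hfu : IsUnit (φ f) := by
    rw [isUnit_iff_ne_zero]
    exact fun h => hf h
  let φ' : Localization.Away f →ₐ[R] ResidueField R :=
    IsLocalization.Away.liftAlgHom (f := φ) f hfu
  have hφ' : φ'.comp (IsScalarTower.toAlgHom R A (Localization.Away f)) = φ := by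
    ext x
    simp [φ']
  have hm := P.hasMap.map φ'
  obtain ⟨r, hr1, hr2⟩ := (((HenselianLocalRing.TFAE R).out 0 1 :
    HenselianLocalRing R ↔ ∀ f : R[X], f.Monic → ∀ a₀ : ResidueField R, aeval a₀ f = 0 →
      aeval a₀ (derivative f) ≠ 0 → ∃ a : R, f.IsRoot a ∧ residue R a = a₀).mp inferInstance) P.f P.monic_f
    (φ' P.x) hm.1 (StandardEtalePair.HasMap.isUnit_derivative_f _ hm).ne_zero
  have hmr : P.HasMap r := by
    refine ⟨by simpa using hr1, ?_⟩
    have h2 := hm.2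
    rw [← hr2] at h2
    have : aeval (residue R r) P.g = residue R (aeval r P.g) :=
      aeval_algebraMap_apply (ResidueField R) r P.g
    rw [this] at h2
    exact (isUnit_map_iff (residue R) _).mp h2
  let s' : Localization.Away f →ₐ[R] R := (P.lift r hmr).comp P.equivRing.toAlgHom
  have hs' : (Algebra.ofId R (ResidueField R)).comp s' = φ' := by
    apply P.hom_ext
    simpa [s'] using hr2
  refine ⟨s'.comp (IsScalarTower.toAlgHom R A (Localization.Away f)), ?_⟩
  rw [← AlgHom.comp_assoc, hs', hφ']

theorem hens_factor (R : Type u) [CommRing R] [HenselianLocalRing R] (p : R[X]) (hp : p.Monic)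
    (f g : (ResidueField R)[X]) (hf : f.Monic) (hg : g.Monic)
    (H : p.map (algebraMap R _) = f * g) (Hc : IsCoprime f g) :
    ∃ f' g' : R[X], p = f' * g' ∧ IsCoprime f' g' ∧ f'.map (residue R) = f ∧
      g'.map (residue R) = g := by
  have hn : p.natDegree = f.natDegree + g.natDegree := by
    simpa [hf.natDegree_mul hg, hp.natDegree_map] using congr(($H).natDegree)
  let E := UniversalCoprimeFactorizationRing.homEquiv (ResidueField R) f.natDegree g.natDegree hn
    (.mk p hp rfl)
  let E' := UniversalCoprimeFactorizationRing.homEquiv R f.natDegree g.natDegree hn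
    (.mk p hp rfl)
  let φ := E.symm ⟨(.mk f hf rfl, .mk g hg rfl), H.symm, Hc⟩
  obtain ⟨s, hs⟩ := hens_section R _ φ
  have h1 := UniversalCoprimeFactorizationRing.homEquiv_comp_fst R f.natDegree g.natDegree hn
    (.mk p hp rfl) s (Algebra.ofId R (ResidueField R))
  have h2 := UniversalCoprimeFactorizationRing.homEquiv_comp_snd R f.natDegree g.natDegree hn
    (.mk p hp rfl) s (Algebra.ofId R (ResidueField R))
  rw [hs] at h1 h2
  have hE : E φ = ⟨(.mk f hf rfl, .mk g hg rfl), H.symm, Hc⟩ := E.apply_symm_apply _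
  change (E φ).1.1 = _ at h1
  change (E φ).1.2 = _ at h2
  rw [hE] at h1 h2
  refine ⟨(E' s).1.1.1, (E' s).1.2.1, ?_, (E' s).2.2, ?_, ?_⟩
  · have := (E' s).2.1
    simpa using this.symm
  · exact congr(($h1).1).symm
  · exact congr(($h2).1).symm

theorem hens_idem (R : Type u) [CommRing R] [HenselianLocalRing R] (M : Type u) [AddCommGroup M]
    [Module R M] [Module.Finite R M] (φ : M →ₗ[R] M) :
    ∃ ε : M →ₗ[R] M, ε ∘ₗ ε = ε ∧
      (∀ (N : Type u) [AddCommGroup N] [Module R N] (f : M →ₗ[R] N), f ∘ₗ φ = f → f ∘ₗ ε = f) ∧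
      (ε = LinearMap.id → Function.Bijective φ) := by
  obtain ⟨p, hp, hpφ⟩ : IsIntegral R (φ : Module.End R M) := Algebra.IsIntegral.isIntegral _
  change aeval φ p = 0 at hpφ
  have hpm : (p.map (algebraMap R (ResidueField R))).Monic := hp.map _
  obtain ⟨q, hq, hqX⟩ := exists_eq_pow_rootMultiplicity_mul_and_not_dvd
    (p.map (algebraMap R (ResidueField R))) hpm.ne_zero 0
  generalize rootMultiplicity 0 (p.map (algebraMap R (ResidueField R))) = n at hq
  simp only [map_zero, sub_zero] at hq hqX
  have hqm : q.Monic := by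
    rw [hq] at hpm
    exact (monic_X_pow n).of_mul_monic_left hpm
  have hco : IsCoprime ((X : (ResidueField R)[X]) ^ n) q :=
    ((irreducible_X.coprime_iff_not_dvd).mpr hqX).pow_left
  obtain ⟨p1, p2, hp12, ⟨a, b, hab⟩, h1, h2⟩ := hens_factor R p hp _ q (monic_X_pow n) hqm hq hco
  have hz : (aeval φ p1 : Module.End R M) * aeval φ p2 = 0 := by rw [← map_mul, ← hp12, hpφ]
  have hz' : (aeval φ p2 : Module.End R M) * aeval φ p1 = 0 := by
    rw [← map_mul, mul_comm, ← hp12, hpφ]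
  have hs : aeval φ (a * p1) + aeval φ (b * p2) = (1 : Module.End R M) := by
    rw [← map_add, hab, map_one]
  refine ⟨aeval φ (a * p1), ?_, ?_, ?_⟩
  · change aeval φ (a * p1) * aeval φ (a * p1) = (aeval φ (a * p1) : Module.End R M)
    have : (aeval φ (a * p1) : Module.End R M) * aeval φ (b * p2) = 0 := by
      rw [← map_mul, show a * p1 * (b * p2) = (a * b) * p by rw [hp12]; ring, map_mul, hpφ,
        mul_zero]
    calc _ = aeval φ (a * p1) * (aeval φ (a * p1) + aeval φ (b * p2)) := by
          rw [mul_add, this, add_zero]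
      _ = _ := by rw [hs, mul_one]
  · intro N _ _ f hf
    have key : ∀ r : R[X], f ∘ₗ (aeval φ r : Module.End R M) = r.eval 1 • f := by
      intro r
      induction r using Polynomial.induction_on' with
      | add r s hr hs => rw [map_add, LinearMap.comp_add, hr, hs, eval_add, add_smul]
      | monomial n c =>
        have hpow : ∀ n : ℕ, f ∘ₗ ((φ ^ n : Module.End R M)) = f := by
          intro n
          induction n with
          | zero => rfl
          | succ n ih => rw [pow_succ, Module.End.mul_eq_comp, ← LinearMap.comp_assoc, ih, hf]
        rw [aeval_monomial, eval_monomial, one_pow, mul_one, ← Algebra.smul_def,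
          LinearMap.comp_smul, hpow]
    have hu : IsUnit (p1.eval 1) := by
      rw [← isUnit_map_iff (residue R)]
      have : (p1.map (residue R)).eval ((residue R) 1) = residue R (p1.eval 1) :=
        eval_map_apply (residue R) 1
      rw [← this, h1]
      simp
    have hp2 : p2.eval 1 • f = 0 := by
      have := key p
      rw [hpφ, LinearMap.comp_zero, hp12, eval_mul, mul_smul] at this
      exact (hu.smul_eq_zero).mp this.symm
    have := congrArg (fun t : Module.End R M => f ∘ₗ t) hs
    simp only [LinearMap.comp_add] at this
    rw [key (b * p2), eval_mul, mul_smul, hp2, smul_zero, add_zero] at this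
    rw [this]; rfl
  · intro h
    have h' : (aeval φ p2 : Module.End R M) = 0 := by
      calc _ = (aeval φ p2 : Module.End R M) * aeval φ (a * p1) := by rw [h]; rfl
        _ = 0 := by rw [mul_comm a, map_mul, ← mul_assoc, hz', zero_mul]
    have hu : IsUnit (p2.coeff 0) := by
      rw [← isUnit_map_iff (residue R), ← coeff_map, h2, isUnit_iff_ne_zero]
      exact fun h => hqX (X_dvd_iff.mpr h)
    have h3 : (aeval φ p2.divX : Module.End R M) * φ + algebraMap R _ (p2.coeff 0) = 0 := by
      rw [← h']
      conv_rhs => rw [← divX_mul_X_add p2, map_add, map_mul, aeval_X, aeval_C]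
    have h3' : φ * (aeval φ p2.divX : Module.End R M) + algebraMap R _ (p2.coeff 0) = 0 := by
      rw [← h']
      conv_rhs => rw [← X_mul_divX_add p2, map_add, map_mul, aeval_X, aeval_C]
    obtain ⟨c, hc⟩ := hu
    constructor
    · rw [injective_iff_map_eq_zero]
      intro x hx
      have := congrArg (fun t : Module.End R M => t x) h3
      simp [hx] at this
      rw [← hc] at this
      exact (c.isUnit.smul_eq_zero).mp this
    · intro y
      have := congrArg (fun t : Module.End R M => t ((↑c⁻¹ : R) • y)) h3'
      simp only [LinearMap.add_apply, Module.End.mul_apply, Module.algebraMap_end_apply,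
        LinearMap.zero_apply, ← hc, smul_smul, Units.mul_inv, one_smul] at this
      refine ⟨- (aeval φ p2.divX : Module.End R M) ((↑c⁻¹ : R) • y), ?_⟩
      rw [map_neg]
      exact (eq_neg_of_add_eq_zero_right this).symm
end Hensel

section Main

theorem factor_inj {R : Type u} [CommRing R] {X E Z : Type u} [AddCommGroup X] [Module R X]
    [AddCommGroup E] [Module R E] [AddCommGroup Z] [Module R Z] (j : X →ₗ[R] E)
    (hj : Function.Injective j) (t : Z →ₗ[R] E) (ht : ∀ z, ∃ x, j x = t z) :
    ∃ s : Z →ₗ[R] X, ∀ z, j (s z) = t z := by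
  refine ⟨(LinearEquiv.ofInjective j hj).symm.toLinearMap ∘ₗ
    t.codRestrict (LinearMap.range j) (fun z => ht z), fun z => ?_⟩
  have := LinearEquiv.apply_symm_apply (LinearEquiv.ofInjective j hj)
    (t.codRestrict (LinearMap.range j) (fun z => ht z) z)
  exact congrArg Subtype.val this

theorem factor_surj {R : Type u} [CommRing R] {F W E : Type u} [AddCommGroup F] [Module R F]
    [AddCommGroup E] [Module R E] [AddCommGroup W] [Module R W] (p : F →ₗ[R] W)
    (hp : Function.Surjective p) (s : F →ₗ[R] E) (hs : ∀ z, p z = 0 → s z = 0) :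
    ∃ t : W →ₗ[R] E, ∀ z, t (p z) = s z := by
  refine ⟨(LinearMap.ker p).liftQ s (fun z hz => hs z hz) ∘ₗ
    (p.quotKerEquivOfSurjective hp).symm.toLinearMap, fun z => ?_⟩
  have : (p.quotKerEquivOfSurjective hp).symm (p z) = (LinearMap.ker p).mkQ z := by
    rw [LinearEquiv.symm_apply_eq]; rfl
  rw [LinearMap.comp_apply, LinearEquiv.coe_coe, this]
  exact (LinearMap.ker p).liftQ_apply s z

theorem push_exists {R : Type u} [CommRing R] {𝒳 : Set (ModuleCat.{u} R)} (h𝒳 : IsResolving R 𝒳)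
    {X U V W : Type u} [AddCommGroup X] [Module R X] [AddCommGroup U] [Module R U]
    [AddCommGroup V] [Module R V] [AddCommGroup W] [Module R W]
    (hX : ModuleCat.of R X ∈ 𝒳) (hW : ModuleCat.of R W ∈ 𝒳)
    (i : U →ₗ[R] V) (p : V →ₗ[R] W) (hi : Function.Injective i) (hip : Function.Exact i p)
    (hp : Function.Surjective p) (t : U →ₗ[R] X) :
    ∃ (Q : ModuleCat.{u} R) (j : X →ₗ[R] Q) (v : V →ₗ[R] Q), Q ∈ 𝒳 ∧ Function.Injective j ∧
      (∀ z, j (t z) = v (i z)) ∧ (∀ q : Q, ∃ x y, q = j x + v y) ∧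
      ∀ (N : Type u) [AddCommGroup N] [Module R N] (a : X →ₗ[R] N) (c : V →ₗ[R] N),
        (∀ z, a (t z) = c (i z)) → ∃ d : Q →ₗ[R] N, (∀ x, d (j x) = a x) ∧ ∀ y, d (v y) = c y := by
  let S : Submodule R (X × V) := LinearMap.range (LinearMap.prod t (-i))
  let j : X →ₗ[R] (X × V) ⧸ S := S.mkQ ∘ₗ LinearMap.inl R X V
  let v : V →ₗ[R] (X × V) ⧸ S := S.mkQ ∘ₗ LinearMap.inr R X V
  have hjt : ∀ z, j (t z) = v (i z) := by
    intro z
    refine (Submodule.Quotient.eq S).mpr ⟨z, ?_⟩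
    simp
  have hsurj : ∀ q : (X × V) ⧸ S, ∃ x y, q = j x + v y := by
    intro q
    obtain ⟨⟨x, y⟩, rfl⟩ := S.mkQ_surjective q
    refine ⟨x, y, ?_⟩
    simp only [j, v, LinearMap.comp_apply, ← map_add]
    simp
  have hdesc : ∀ (N : Type u) [AddCommGroup N] [Module R N] (a : X →ₗ[R] N) (c : V →ₗ[R] N),
        (∀ z, a (t z) = c (i z)) → ∃ d : ((X × V) ⧸ S) →ₗ[R] N,
          (∀ x, d (j x) = a x) ∧ ∀ y, d (v y) = c y := by
    intro N _ _ a c h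
    refine ⟨S.liftQ (LinearMap.coprod a c) ?_, ?_, ?_⟩
    · rintro _ ⟨z, rfl⟩
      simp [h]
    · intro x; simp [j]
    · intro x; simp [v]
  have hj : Function.Injective j := by
    rw [injective_iff_map_eq_zero]
    intro x hx
    obtain ⟨z, hz⟩ := (Submodule.Quotient.mk_eq_zero S).mp hx
    have hz1 : t z = x := congrArg Prod.fst hz
    have hz2 : - i z = 0 := congrArg Prod.snd hz
    have : z = 0 := hi (by rw [neg_eq_zero.mp hz2, map_zero])
    rw [← hz1, this, map_zero]
  obtain ⟨π, hπj, hπv⟩ := hdesc W 0 p (fun z => by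
    rw [hip.apply_apply_eq_zero]; rfl)
  refine ⟨ModuleCat.of R ((X × V) ⧸ S), j, v, ?_, hj, hjt, hsurj, hdesc⟩
  refine h𝒳.extClosed (ModuleCat.of R X) (ModuleCat.of R ((X × V) ⧸ S)) (ModuleCat.of R W) j π
    ⟨hj, ?_, ?_⟩ hX hW
  · intro q
    constructor
    · intro hq
      obtain ⟨x, y, rfl⟩ := hsurj q
      have h0 : p y = 0 := by
        have : π (j x + v y) = 0 := hq
        rw [map_add, hπj, hπv] at this
        simpa using this
      obtain ⟨z, rfl⟩ := (hip y).mp h0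
      exact ⟨x + t z, by rw [map_add, hjt]⟩
    · rintro ⟨x, rfl⟩
      exact hπj x
  · intro w
    obtain ⟨y, rfl⟩ := hp w
    exact ⟨v y, hπv y⟩

/-- Extension property of the kernel of `f` with respect to `𝒳`. -/
def PerpKer {R : Type u} [CommRing R] (𝒳 : Set (ModuleCat.{u} R)) {X M : Type u} [AddCommGroup X]
    [Module R X] [AddCommGroup M] [Module R M] (f : X →ₗ[R] M) : Prop :=
  ∀ (U V W : Type u) [AddCommGroup U] [Module R U] [AddCommGroup V] [Module R V]
    [AddCommGroup W] [Module R W], ModuleCat.of R W ∈ 𝒳 →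
    ∀ (i : U →ₗ[R] V) (p : V →ₗ[R] W), Function.Injective i → Function.Exact i p →
      Function.Surjective p → ∀ t : U →ₗ[R] X, (∀ z, f (t z) = 0) →
        ∃ s : V →ₗ[R] X, (∀ y, f (s y) = 0) ∧ ∀ z, s (i z) = t z

theorem wakamatsu {R : Type u} [CommRing R] {𝒳 : Set (ModuleCat.{u} R)} (h𝒳 : IsResolving R 𝒳)
    {X M : Type u} [AddCommGroup X] [Module R X] [AddCommGroup M] [Module R M] (f : X →ₗ[R] M)
    (hf : IsRightApprox R 𝒳 (X := ModuleCat.of R X) (M := ModuleCat.of R M) f)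
    (hmin : ∀ φ : X →ₗ[R] X, f ∘ₗ φ = f → Function.Bijective φ) : PerpKer 𝒳 f := by
  intro U V W _ _ _ _ _ _ hW i p hi hip hp t ht
  obtain ⟨Q, j, v, hQ, hj, hjt, hsurj, hdesc⟩ := push_exists h𝒳 hf.1 hW i p hi hip hp t
  obtain ⟨g, hgj, hgv⟩ := hdesc M f 0 (fun z => by rw [ht]; rfl)
  obtain ⟨h, hh⟩ := hf.2 Q hQ g
  have hh' : ∀ q, f (h q) = g q := fun q => LinearMap.congr_fun hh q
  let φ : X →ₗ[R] X := h ∘ₗ j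
  have hφ : f ∘ₗ φ = f := by
    ext x
    exact (hh' (j x)).trans (hgj x)
  let e := LinearEquiv.ofBijective φ (hmin φ hφ)
  have hfe : ∀ x, f (e.symm x) = f x := by
    intro x
    have := LinearMap.congr_fun hφ (e.symm x)
    rw [← this]
    exact congrArg f (e.apply_symm_apply x)
  refine ⟨e.symm.toLinearMap ∘ₗ h ∘ₗ v, ?_, ?_⟩
  · intro y
    exact (hfe _).trans ((hh' _).trans (hgv y))
  · intro z
    change e.symm (h (v (i z))) = t z
    rw [LinearEquiv.symm_apply_eq, ← hjt]
    rfl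

theorem exists_minimal {R : Type u} [CommRing R] [IsNoetherianRing R] [HenselianLocalRing R]
    {𝒳 : Set (ModuleCat.{u} R)} (h𝒳 : IsResolving R 𝒳) (M : Type u) [AddCommGroup M] [Module R M]
    (hM : HasRightApprox R 𝒳 (ModuleCat.of R M)) :
    ∃ (X : ModuleCat.{u} R) (f : X →ₗ[R] M),
      IsRightApprox R 𝒳 (X := X) (M := ModuleCat.of R M) f ∧ PerpKer 𝒳 f := by
  obtain ⟨X, f, hX, hf⟩ := hM
  change X →ₗ[R] M at f
  have := h𝒳.finite X hX
  have : IsNoetherian R X := inferInstance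
  let T : Set (Submodule R X) := {N | ∃ e : X →ₗ[R] X, e ∘ₗ e = e ∧ f ∘ₗ e = f ∧
    LinearMap.ker e = N}
  have hT : T.Nonempty := ⟨_, LinearMap.id, rfl, rfl, rfl⟩
  obtain ⟨N, ⟨e, hee, hfe, hN⟩, hmax⟩ := set_has_maximal_iff_noetherian.mpr this T hT
  let X' := LinearMap.range e
  let c : X →ₗ[R] X' := e.rangeRestrict
  have hc : ∀ x : X', c x = x := by
    rintro ⟨_, x, rfl⟩
    exact Subtype.ext (LinearMap.congr_fun hee x)
  have hX' : ModuleCat.of R X' ∈ 𝒳 := by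
    let E : X ≃ₗ[R] X' × LinearMap.ker c :=
      LinearEquiv.ofBijective (c.prod
        ((LinearMap.id - X'.subtype ∘ₗ c).codRestrict (LinearMap.ker c) (fun x => by
          simp [hc]))) (by
        constructor
        · rw [injective_iff_map_eq_zero]
          intro x hx
          have h1 : c x = 0 := congrArg Prod.fst hx
          have h2 : x - (c x : X) = 0 := congrArg (fun q => (q.2 : X)) hx
          rwa [h1, ZeroMemClass.coe_zero, sub_zero] at h2
        · rintro ⟨a, b⟩
          have hb : c b = 0 := b.2
          refine ⟨a + b, Prod.ext ?_ (Subtype.ext ?_)⟩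
          · change c (a + b) = a
            rw [map_add, hc, hb, add_zero]
          · change (a + b : X) - (c (a + b : X) : X) = b
            rw [map_add, hc, hb]; simp)
    exact h𝒳.summandClosed (ModuleCat.of R X') (ModuleCat.of R (LinearMap.ker c))
      (h𝒳.isoClosed hX E)
  have : Module.Finite R X' := h𝒳.finite _ hX'
  let f' : X' →ₗ[R] M := f ∘ₗ X'.subtype
  have hfc : ∀ x, f' (c x) = f x := fun x => LinearMap.congr_fun hfe x
  have happ : IsRightApprox R 𝒳 (X := ModuleCat.of R X') (M := ModuleCat.of R M) f' := by
    refine ⟨hX', fun W hW g => ?_⟩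
    obtain ⟨h, hh⟩ := hf W hW g
    refine ⟨c ∘ₗ h, ?_⟩
    rw [← hh]
    ext w
    exact hfc _
  refine ⟨ModuleCat.of R X', f', happ, wakamatsu h𝒳 f' happ ?_⟩
  intro φ hφ
  obtain ⟨ε, h1, h2, h3⟩ := hens_idem R X' φ
  apply h3
  have h2' := h2 M f' hφ
  let e' : X →ₗ[R] X := X'.subtype ∘ₗ ε ∘ₗ c
  have hmem : LinearMap.ker e' ∈ T := by
    refine ⟨e', ?_, ?_, rfl⟩
    · ext x
      change ((ε (c (ε (c x) : X')) : X') : X) = (ε (c x) : X')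
      rw [hc]
      exact congrArg Subtype.val (LinearMap.congr_fun h1 (c x))
    · ext x
      change f' (ε (c x)) = f x
      rw [← hfc x]
      exact LinearMap.congr_fun h2' (c x)
  have hle : N ≤ LinearMap.ker e' := by
    rw [← hN]
    intro x hx
    have : c x = 0 := Subtype.ext hx
    change ((ε (c x) : X') : X) = 0
    rw [this, map_zero]; rfl
  have heq : LinearMap.ker e' = N := by
    by_contra hne
    exact hmax _ hmem (lt_of_le_of_ne hle (Ne.symm hne))
  ext1 x
  have hx0 : ε (ε x - x) = 0 := by
    rw [map_sub, sub_eq_zero]; exact LinearMap.congr_fun h1 x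
  have : ((ε x - x : X') : X) ∈ LinearMap.ker e' := by
    change ((ε (c ((ε x - x : X') : X)) : X') : X) = 0
    rw [hc, hx0]; rfl
  rw [heq, ← hN] at this
  have h0 : c ((ε x - x : X') : X) = 0 := Subtype.ext this
  rw [hc] at h0
  exact sub_eq_zero.mp h0

theorem lift_perp {R : Type u} [CommRing R] {𝒳 : Set (ModuleCat.{u} R)} (h𝒳 : IsResolving R 𝒳)
    {X K E P W : Type u} [AddCommGroup X] [Module R X] [AddCommGroup K] [Module R K]
    [AddCommGroup E] [Module R E] [AddCommGroup P] [Module R P] [AddCommGroup W] [Module R W]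
    (k : X →ₗ[R] K) (hk : PerpKer 𝒳 k) (j : X →ₗ[R] E) (hj : Function.Injective j)
    (d : E →ₗ[R] P) (hd : Function.Surjective d)
    (hjd : ∀ x, k x = 0 → d (j x) = 0) (hker : ∀ q, d q = 0 → ∃ x, k x = 0 ∧ j x = q)
    (hW : ModuleCat.of R W ∈ 𝒳) (w : W →ₗ[R] P) : ∃ s : W →ₗ[R] E, ∀ x, d (s x) = w x := by
  have : Module.Finite R W := h𝒳.finite _ hW
  obtain ⟨n, p, hp⟩ := Module.Finite.exists_fin' R W
  obtain ⟨a, ha⟩ := Module.projective_lifting_property d (w ∘ₗ p) hd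
  have ha' : ∀ z, d (a z) = w (p z) := fun z => LinearMap.congr_fun ha z
  have hz0 : ∀ z : LinearMap.ker p, d (a z) = 0 := by
    intro z
    rw [ha', show p z = 0 from z.2, map_zero]
  obtain ⟨t, ht⟩ := factor_inj j hj (a ∘ₗ (LinearMap.ker p).subtype) (fun z => by
    obtain ⟨x, -, hx⟩ := hker _ (hz0 z)
    exact ⟨x, hx⟩)
  have htk : ∀ z, k (t z) = 0 := by
    intro z
    obtain ⟨x, hx, hx'⟩ := hker _ (hz0 z)
    have : t z = x := hj ((ht z).trans hx'.symm)
    rw [this, hx]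
  obtain ⟨s, hs, hs'⟩ := hk _ _ W hW (LinearMap.ker p).subtype p (Submodule.injective_subtype _)
    (LinearMap.exact_subtype_ker_map p) hp t htk
  obtain ⟨r, hr⟩ := factor_surj p hp (a - j ∘ₗ s) (fun z hz => by
    have h1 := hs' ⟨z, hz⟩
    have h2 := ht ⟨z, hz⟩
    rw [← h1] at h2
    exact sub_eq_zero.mpr h2.symm)
  refine ⟨r, fun x => ?_⟩
  obtain ⟨z, rfl⟩ := hp x
  rw [hr, LinearMap.sub_apply, map_sub, ha']
  change _ - d (j (s z)) = _
  rw [hjd _ (hs z), sub_zero]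

theorem approx_surj {R : Type u} [CommRing R] {𝒳 : Set (ModuleCat.{u} R)} (h𝒳 : IsResolving R 𝒳)
    {X M : ModuleCat.{u} R} (f : X →ₗ[R] M)
    (hf : ∀ W ∈ 𝒳, ∀ g : ↥W →ₗ[R] ↥M, ∃ h : ↥W →ₗ[R] ↥X, f ∘ₗ h = g) :
    Function.Surjective f := by
  intro m
  obtain ⟨h, hh⟩ := hf (ModuleCat.of R R) (h𝒳.freeMem _ (inferInstanceAs (Module.Finite R R))
    (inferInstanceAs (Module.Free R R))) (LinearMap.toSpanSingleton R M m)
  refine ⟨h (1 : R), ?_⟩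
  have := LinearMap.congr_fun hh (1 : R)
  refine this.trans ?_
  exact one_smul R m

theorem memCC_ker {R : Type u} [CommRing R] {𝒳 : Set (ModuleCat.{u} R)} 
    {C : ModuleCat.{u} R} (hC : MemCC R 𝒳 C) :
    ∃ (X : ModuleCat.{u} R) (f : X →ₗ[R] C), IsRightApprox R 𝒳 f ∧
      HasRightApprox R 𝒳 (ModuleCat.of R (LinearMap.ker f)) := by
  obtain ⟨X₀, X₁, g, f, h0, h1, h⟩ := hC
  refine ⟨X₀, f, ⟨h0, fun W hW => (h W hW).1⟩, ?_⟩
  have hfg : f ∘ₗ g = 0 := ((h X₁ h1).2 g).mpr ⟨LinearMap.id, rfl⟩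
  refine ⟨X₁, g.codRestrict (LinearMap.ker f) (fun x => LinearMap.congr_fun hfg x), h1, ?_⟩
  intro W hW w
  change W →ₗ[R] LinearMap.ker f at w
  obtain ⟨t, ht⟩ := ((h W hW).2 ((LinearMap.ker f).subtype ∘ₗ w)).mp (by
    ext x; exact (w x).2)
  refine ⟨t, ?_⟩
  ext1 x
  exact Subtype.ext (LinearMap.congr_fun ht x)

theorem memCC_of_ker {R : Type u} [CommRing R] {𝒳 : Set (ModuleCat.{u} R)} 
    {X C : ModuleCat.{u} R} (f : X →ₗ[R] C) (hf : IsRightApprox R 𝒳 f)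
    (hK : HasRightApprox R 𝒳 (ModuleCat.of R (LinearMap.ker f))) : MemCC R 𝒳 C := by
  obtain ⟨X₁, k, h1, hk⟩ := hK
  change X₁ →ₗ[R] LinearMap.ker f at k
  refine ⟨X, X₁, (LinearMap.ker f).subtype ∘ₗ k, f, hf.1, h1, fun W hW => ⟨hf.2 W hW, ?_⟩⟩
  intro w
  constructor
  · intro hw
    obtain ⟨h, hh⟩ := hk W hW (w.codRestrict (LinearMap.ker f) (fun x => LinearMap.congr_fun hw x))
    refine ⟨h, ?_⟩
    ext x
    exact congrArg Subtype.val (LinearMap.congr_fun hh x)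
  · rintro ⟨h, rfl⟩
    ext x
    exact (k (h x)).2

theorem main_dir {R : Type u} [CommRing R] [IsNoetherianRing R] [HenselianLocalRing R]
    {𝒳 : Set (ModuleCat.{u} R)} (h𝒳 : IsResolving R 𝒳) (A B C : ModuleCat.{u} R)
    (f : ↥A →ₗ[R] ↥B) (g : ↥B →ₗ[R] ↥C) (hfg : IsSES R f g) (hB : HasRightApprox R 𝒳 B)
    (hC : MemCC R 𝒳 C) : HasRightApprox R 𝒳 A := by
  obtain ⟨hf, hex, hg⟩ := hfg
  obtain ⟨X0, f0, ⟨hX0, hf0⟩, hK⟩ := memCC_ker hC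
  have hf0s := approx_surj h𝒳 f0 hf0
  obtain ⟨XK, k, ⟨hXK, hk⟩, hperp⟩ := exists_minimal h𝒳 _ hK
  have hks := approx_surj h𝒳 (M := ModuleCat.of R (LinearMap.ker f0)) k hk
  obtain ⟨XB, b, hXB, hb⟩ := hB
  have hbs := approx_surj h𝒳 b hb
  have : Module.Finite R XB := h𝒳.finite _ hXB
  obtain ⟨n, p, hp⟩ := Module.Finite.exists_fin' R XB
  -- the pullback of `XB → C ← X0`
  let P : Submodule R (XB × X0) :=
    LinearMap.ker ((g ∘ₗ b) ∘ₗ LinearMap.fst R XB X0 - f0 ∘ₗ LinearMap.snd R XB X0)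
  have hP : ∀ x y, (x, y) ∈ P ↔ g (b x) = f0 y := by
    intro x y
    change g (b x) - f0 y = 0 ↔ _
    exact sub_eq_zero
  obtain ⟨y, hy⟩ := Module.projective_lifting_property f0 ((g ∘ₗ b) ∘ₗ p) hf0s
  have hy' : ∀ z, f0 (y z) = g (b (p z)) := fun z => LinearMap.congr_fun hy z
  let c : (Fin n → R) →ₗ[R] P := (p.prod y).codRestrict P (fun z => (hP _ _).mpr (hy' z).symm)
  have hΩ : ModuleCat.of R (LinearMap.ker p) ∈ 𝒳 :=
    h𝒳.kerClosed (ModuleCat.of R (LinearMap.ker p)) (ModuleCat.of R (Fin n → R)) XB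
      (LinearMap.ker p).subtype p ⟨Submodule.injective_subtype _,
        LinearMap.exact_subtype_ker_map p, hp⟩
      (h𝒳.freeMem _ (inferInstanceAs (Module.Finite R (Fin n → R)))
        (inferInstanceAs (Module.Free R (Fin n → R)))) hXB
  obtain ⟨t, ht⟩ := hk _ hΩ ((y ∘ₗ (LinearMap.ker p).subtype).codRestrict (LinearMap.ker f0)
    (fun z => by
      change f0 (y z) = 0
      rw [hy', show p z = 0 from z.2, map_zero, map_zero]))
  change LinearMap.ker p →ₗ[R] XK at t
  have ht' : ∀ z, (k (t z) : X0) = y z := fun z => congrArg Subtype.val (LinearMap.congr_fun ht z)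
  obtain ⟨Q, j, v, hQ, hj, hjt, hsurj, hdesc⟩ := push_exists h𝒳 (X := XK) (W := XB) hXK hXB
    (LinearMap.ker p).subtype p (Submodule.injective_subtype _)
        (LinearMap.exact_subtype_ker_map p) hp t
  let a : XK →ₗ[R] P := (LinearMap.prod 0 ((LinearMap.ker f0).subtype ∘ₗ k)).codRestrict P
    (fun x => (hP _ _).mpr (by
      rw [LinearMap.zero_apply, map_zero, map_zero]; exact (k x).2.symm))
  obtain ⟨d, hdj, hdv⟩ := hdesc P a c (fun z => Subtype.ext (Prod.ext z.2.symm (ht' z)))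
  have hds : Function.Surjective d := by
    rintro ⟨⟨x, x0⟩, hx⟩
    obtain ⟨z, rfl⟩ := hp x
    have hx' := (hP _ _).mp hx
    obtain ⟨m, hm⟩ := hks ⟨x0 - y z, by
      rw [LinearMap.mem_ker, map_sub, hy', hx', sub_self]⟩
    refine ⟨j m + v z, ?_⟩
    rw [map_add, hdj, hdv]
    refine Subtype.ext (Prod.ext ?_ ?_)
    · change 0 + p z = p z
      rw [zero_add]
    · change (k m : X0) + y z = x0
      rw [hm]; simp
  have hjd : ∀ x, k x = 0 → d (j x) = 0 := by
    intro x hx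
    rw [hdj]
    refine Subtype.ext (Prod.ext rfl ?_)
    change (k x : X0) = 0
    rw [hx]; rfl
  have hker : ∀ q, d q = 0 → ∃ x, k x = 0 ∧ j x = q := by
    intro q hq
    obtain ⟨x, z, rfl⟩ := hsurj q
    rw [map_add, hdj, hdv] at hq
    have h1 : (0 : XB) + p z = 0 := congrArg (fun q : P => q.1.1) hq
    have h2 : (k x : X0) + y z = 0 := congrArg (fun q : P => q.1.2) hq
    rw [zero_add] at h1
    refine ⟨x + t ⟨z, h1⟩, ?_, ?_⟩
    · apply Subtype.ext
      rw [map_add, Submodule.coe_add, ht']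
      exact h2
    · rw [map_add, hjt]; rfl
  -- the map to `X0`
  let m : Q →ₗ[R] X0 := LinearMap.snd R XB X0 ∘ₗ P.subtype ∘ₗ d
  have hms : Function.Surjective m := by
    intro x0
    obtain ⟨bb, hbb⟩ := hg (f0 x0)
    obtain ⟨x, rfl⟩ := hbs bb
    obtain ⟨q, hq⟩ := hds ⟨(x, x0), (hP _ _).mpr hbb⟩
    exact ⟨q, congrArg (fun q : P => q.1.2) hq⟩
  have hker𝒳 : ModuleCat.of R (LinearMap.ker m) ∈ 𝒳 :=
    h𝒳.kerClosed (ModuleCat.of R (LinearMap.ker m)) Q X0 (LinearMap.ker m).subtype m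
      ⟨Submodule.injective_subtype _, LinearMap.exact_subtype_ker_map m, hms⟩ hQ hX0
  obtain ⟨r, hr⟩ := factor_inj f hf
    (b ∘ₗ LinearMap.fst R XB X0 ∘ₗ P.subtype ∘ₗ d ∘ₗ (LinearMap.ker m).subtype) (fun q => by
      refine (hex _).mp ?_
      have h1 := (hP _ _).mp (d q).2
      have h2 : (d q).1.2 = 0 := q.2
      rw [h2, map_zero] at h1
      exact h1)
  refine ⟨ModuleCat.of R (LinearMap.ker m), r, hker𝒳, ?_⟩
  intro W hW w
  obtain ⟨w1, hw1⟩ := hb W hW (f ∘ₗ w)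
  have hw1' : ∀ x, b (w1 x) = f (w x) := fun x => LinearMap.congr_fun hw1 x
  obtain ⟨s, hs⟩ := lift_perp h𝒳 k hperp j hj d hds hjd hker (W := W) hW
    ((w1.prod 0).codRestrict P (fun x => (hP _ _).mpr (by
      rw [hw1', hex.apply_apply_eq_zero]; exact (map_zero f0).symm)))
  refine ⟨s.codRestrict (LinearMap.ker m) (fun x => ?_), ?_⟩
  · exact congrArg (fun q : P => q.1.2) (hs x)
  · ext1 x
    apply hf
    refine (hr _).trans ?_
    rw [← hw1' x]
    exact congrArg (fun q : P => b q.1.1) (hs x)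

end Main

/-- Over a henselian Gorenstein local ring, a resolving subcategory `𝒳`
is coherent iff `rap 𝒳` is closed under kernels of surjections. -/
theorem stmt13 (R : Type u) [CommRing R] [IsNoetherianRing R] [IsLocalRing R]
    [HenselianLocalRing R] (hG : IsGorensteinLocalRing R)
    (𝒳 : Set (ModuleCat.{u} R)) (h𝒳 : IsResolving R 𝒳) :
    Coherent R 𝒳 ↔
      ∀ (A B C : ModuleCat.{u} R), Module.Finite R A → Module.Finite R B →
        Module.Finite R C → ∀ (f : ↥A →ₗ[R] ↥B) (g : ↥B →ₗ[R] ↥C), IsSES R f g →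
          HasRightApprox R 𝒳 B → HasRightApprox R 𝒳 C → HasRightApprox R 𝒳 A := by
  constructor
  · intro hco A B C _ _ hC f g hfg hB hrC
    exact main_dir h𝒳 A B C f g hfg hB ((hco C hC).mpr hrC)
  · intro H M hM
    constructor
    · intro h
      obtain ⟨X, f, hf, -⟩ := memCC_ker h
      exact ⟨X, f, hf⟩
    · rintro ⟨X, f, hf⟩
      have hX : Module.Finite R X := h𝒳.finite X hf.1
      refine memCC_of_ker f hf ?_
      exact H (ModuleCat.of R (LinearMap.ker f)) X M
        (inferInstanceAs (Module.Finite R (LinearMap.ker f))) hX hM (LinearMap.ker f).subtype f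
        ⟨Submodule.injective_subtype _, LinearMap.exact_subtype_ker_map f,
          approx_surj h𝒳 f hf.2⟩
        ⟨X, LinearMap.id, hf.1, fun W _ g => ⟨g, rfl⟩⟩ ⟨X, f, hf⟩
end

section
/- Let R be a henselian Gorenstein Noetherian local ring and 𝒳 a resolving subcategory of the category of finitely generated R-modules. If every module in 𝒳^⊥ admits a right 𝒳-approximation, then 𝒳 is coherent. -/
open CategoryTheory IsLocalRing

universe u

section Hensel
open Polynomial

lemma hensel_section {R κ : Type u} [CommRing R] [HenselianLocalRing R] [Field κ] [Algebra R κ]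
    (hs : Function.Surjective (algebraMap R κ)) {R' : Type u} [CommRing R'] [Algebra R R']
    [Algebra.Etale R R'] (ψ : R' →ₐ[R] κ) :
    ∃ σ : R' →ₐ[R] R, (Algebra.ofId R κ).comp σ = ψ := by
  have hker : ∀ r : R, algebraMap R κ r = 0 ↔ r ∈ maximalIdeal R := by
    have := eq_maximalIdeal (RingHom.ker_isMaximal_of_surjective (algebraMap R κ) hs)
    intro r; rw [← this]; rfl
  have hunit : ∀ r : R, algebraMap R κ r ≠ 0 → IsUnit r := fun r hr => by
    by_contra h
    exact hr ((hker r).2 h)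
  let Q : Ideal R' := RingHom.ker ψ.toRingHom
  have : Q.IsPrime := RingHom.ker_isPrime _
  obtain ⟨f, hf, hst⟩ := Algebra.IsEtaleAt.exists_isStandardEtale (R := R) Q
  obtain ⟨P⟩ := hst.nonempty_standardEtalePresentation
  have hfu : IsUnit (ψ f) := isUnit_iff_ne_zero.2 hf
  let ψ' : Localization.Away f →ₐ[R] κ := IsLocalization.liftAlgHom (M := Submonoid.powers f)
    (f := ψ) (by rintro ⟨_, n, rfl⟩; simpa using hfu.pow n)
  have hmap : P.P.HasMap (ψ' P.x) := P.hasMap.map ψ'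
  obtain ⟨a₀, ha₀⟩ := hs (ψ' P.x)
  have h1 := hmap.1
  have h2 := hmap.isUnit_derivative_f
  have h3 := hmap.2
  rw [← ha₀, aeval_algebraMap_apply] at h1 h2 h3
  simp only [coe_aeval_eq_eval] at h1 h2 h3
  obtain ⟨a, ha, haa⟩ := HenselianLocalRing.is_henselian P.P.f P.P.monic_f a₀ ((hker _).1 h1)
    (hunit _ h2.ne_zero)
  have haκ : algebraMap R κ a = algebraMap R κ a₀ := by
    rw [← sub_eq_zero, ← map_sub]; exact (hker _).2 haa
  have hm : P.P.HasMap a := by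
    refine ⟨by simpa [IsRoot] using ha, ?_⟩
    apply hunit
    rw [← aeval_algebraMap_apply, haκ, aeval_algebraMap_apply]
    simpa using h3.ne_zero
  let τ : Localization.Away f →ₐ[R] R := (P.P.lift a hm).comp P.equivRing.toAlgHom
  have hτ : (Algebra.ofId R κ).comp τ = ψ' := by
    apply P.hom_ext
    simp [τ, Algebra.ofId_apply, haκ, ha₀]
  refine ⟨τ.comp (IsScalarTower.toAlgHom R R' _), ?_⟩
  rw [← AlgHom.comp_assoc, hτ]
  ext x
  simp [ψ']

lemma hensel_factor {R : Type u} [CommRing R] [HenselianLocalRing R] (p : R[X]) (hp : p.Monic) :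
    ∃ (a b : R[X]) (m : ℕ), a.Monic ∧ p = a * b ∧ IsCoprime a b ∧
      (∀ i, (a - X ^ m).coeff i ∈ maximalIdeal R) ∧ IsUnit (b.coeff 0) := by
  let κ := (maximalIdeal R).ResidueField
  have hker : ∀ r : R, algebraMap R κ r = 0 ↔ r ∈ maximalIdeal R := fun r =>
    Ideal.algebraMap_residueField_eq_zero
  have hs : Function.Surjective (algebraMap R κ) := 
    Ideal.algebraMap_residueField_surjective _
  obtain ⟨q, hq, hq'⟩ := exists_eq_pow_rootMultiplicity_mul_and_not_dvd
      (p.map (algebraMap R κ)) (hp.map _).ne_zero 0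
  have hqm : q.Monic := by
    simpa [(hp.map _).leadingCoeff] using! congr(leadingCoeff $hq).symm
  set m := rootMultiplicity 0 (p.map (algebraMap R κ))
  rw [C_0, sub_zero] at hq hq'
  have hcop : IsCoprime (X ^ m) q := by
    apply IsCoprime.pow_left
    exact ((prime_X (R := κ)).irreducible.coprime_iff_not_dvd).2 hq'
  obtain ⟨R', _, _, _, P, _, _, a', b', hP, ha'm, hb'm, hfab', hcd, ha', hb'⟩ :=
    Algebra.exists_etale_bijective_residueFieldMap_and_map_eq_mul_and_isCoprime (maximalIdeal R) p
      (X ^ m) q hp (monic_X.pow _) hqm hq hcop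
  let e := AlgEquiv.ofBijective _ hP
  let ψ : R' →ₐ[R] κ := e.symm.toAlgHom.comp (IsScalarTower.toAlgHom R R' _)
  obtain ⟨σ, hσ⟩ := hensel_section hs ψ
  have hκ : ∀ (c' : R'[X]) (c : κ[X]), c.map e.toAlgHom.toRingHom = c'.map (algebraMap _ _) →
      (c'.map σ.toRingHom).map (algebraMap R κ) = c := by
    intro c' c h
    have : (algebraMap R κ).comp σ.toRingHom = ψ.toRingHom := by
      rw [← hσ]; rfl
    rw [Polynomial.map_map, this]
    have h2 : ψ.toRingHom = e.symm.toAlgHom.toRingHom.comp (algebraMap R' _) := rfl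
    rw [h2, ← Polynomial.map_map, ← h, Polynomial.map_map]
    have : e.symm.toAlgHom.toRingHom.comp e.toAlgHom.toRingHom = RingHom.id _ := by
      ext x; simp
    rw [this, Polynomial.map_id]
  refine ⟨a'.map σ.toRingHom, b'.map σ.toRingHom, m, ha'm.map _, ?_, ?_, ?_, ?_⟩
  · rw [← Polynomial.map_mul, ← hfab', Polynomial.map_map]
    have : σ.toRingHom.comp (algebraMap R R') = RingHom.id R := by
      ext x; simp
    rw [this, Polynomial.map_id]
  · exact hcd.map (mapRingHom σ.toRingHom)
  · intro i
    rw [← hker, ← coeff_map, Polynomial.map_sub, hκ a' _ ha']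
    simp
  · by_contra h
    apply hq'
    rw [X_dvd_iff, ← hκ b' q hb', coeff_map]
    exact (hker _).2 h

end Hensel
section Fitting
open Polynomial

lemma henselian_fitting {R : Type u} [CommRing R] [IsNoetherianRing R] [HenselianLocalRing R]
    {V : Type u} [AddCommGroup V] [Module R V] [Module.Finite R V] (φ : Module.End R V) :
    ∃ N C : Submodule R V, IsCompl N C ∧ (∀ x ∈ N, ∃ y : V, y - φ y = x) ∧
      (N = ⊥ → Function.Bijective φ) := by
  obtain ⟨p, hp, hpφ⟩ := LinearMap.exists_monic_and_aeval_eq_zero R φ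
  obtain ⟨a, b, m, ham, rfl, hcop, ha, hb⟩ := hensel_factor p hp
  let N := LinearMap.ker (aeval φ a)
  let C := LinearMap.ker (aeval φ b)
  have hstab : ∀ (q : R[X]), ∀ x ∈ N, aeval φ q x ∈ N := by
    intro q x hx
    change aeval φ a (aeval φ q x) = 0
    rw [← Module.End.mul_apply, ← map_mul, mul_comm, map_mul, Module.End.mul_apply]
    rw [show aeval φ a x = 0 from hx, map_zero]
  have hcompl : IsCompl N C := by
    refine ⟨Polynomial.disjoint_ker_aeval_of_isCoprime φ hcop, ?_⟩
    rw [codisjoint_iff, Polynomial.sup_ker_aeval_eq_ker_aeval_mul_of_coprime φ hcop, hpφ]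
    exact LinearMap.ker_zero
  refine ⟨N, C, hcompl, ?_, ?_⟩
  · have key : N ≤ N.map (1 - φ) := by
      refine Submodule.le_of_le_smul_of_le_jacobson_bot (I := maximalIdeal R)
        (IsNoetherian.noetherian N) (jacobson_eq_maximalIdeal ⊥ bot_ne_top).ge ?_
      intro x hx
      have h1 : aeval φ (X ^ m : R[X]) x ∈ maximalIdeal R • N := by
        have : aeval φ (X ^ m : R[X]) x = - aeval φ (a - X ^ m) x := by
          rw [map_sub, LinearMap.sub_apply, show aeval φ a x = 0 from hx]; simp
        rw [this, aeval_eq_sum_range, LinearMap.sum_apply]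
        refine neg_mem (Submodule.sum_mem _ fun i _ => ?_)
        rw [LinearMap.smul_apply]
        refine Submodule.smul_mem_smul (ha i) ?_
        simpa using hstab (X ^ i) x hx
      obtain ⟨q, hq⟩ : (1 - X : R[X]) ∣ 1 - X ^ m := by
        simpa using sub_dvd_pow_sub_pow (1 : R[X]) X m
      have h2 : x = (1 - φ) (aeval φ q x) + aeval φ (X ^ m : R[X]) x := by
        have := congr(aeval φ $hq x)
        simp only [map_sub, map_mul, aeval_X, map_one, Module.End.mul_apply, 
          LinearMap.sub_apply] at this ⊢
        rw [← this]; simp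
      rw [h2]
      exact Submodule.add_mem_sup (Submodule.mem_map_of_mem (hstab q x hx)) h1
    intro x hx
    obtain ⟨y, -, hy⟩ := key hx
    exact ⟨y, by simpa using hy⟩
  · intro hN
    have hC : aeval φ b = 0 := by
      have : C = ⊤ := by simpa [hN] using hcompl.sup_eq_top
      exact LinearMap.ker_eq_top.1 this
    have hsurj : Function.Surjective φ := by
      intro x
      obtain ⟨u, hu⟩ := hb
      have h1 := congr(aeval φ $(X_mul_divX_add b) ((↑u⁻¹ : R) • x))
      rw [hC] at h1
      simp only [map_add, map_mul, aeval_X, aeval_C, LinearMap.add_apply, Module.End.mul_apply,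
        Module.algebraMap_end_apply, ← hu, smul_smul, Units.mul_inv, one_smul, 
        LinearMap.zero_apply] at h1
      exact ⟨- aeval φ b.divX ((↑u⁻¹ : R) • x), by rw [map_neg]; exact (eq_neg_of_add_eq_zero_right h1).symm⟩
    exact ⟨IsNoetherian.injective_of_surjective_endomorphism φ hsurj, hsurj⟩

lemma exists_minimal_approx {R : Type u} [CommRing R] [IsNoetherianRing R] [HenselianLocalRing R]
    (𝒳 : Set (ModuleCat.{u} R)) (h𝒳 : IsResolving R 𝒳) (M : ModuleCat.{u} R)
    (hM : HasRightApprox R 𝒳 M) :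
    ∃ (X : ModuleCat.{u} R) (f : X →ₗ[R] M), IsRightApprox R 𝒳 f ∧
      ∀ θ : X →ₗ[R] X, f ∘ₗ θ = f → Function.Bijective θ := by
  classical
  let μ : ModuleCat.{u} R → ℕ := fun X =>
    Module.finrank (ResidueField R) (TensorProduct R (ResidueField R) X)
  have hex : ∃ n, ∃ (X : ModuleCat.{u} R) (f : X →ₗ[R] M), IsRightApprox R 𝒳 f ∧ μ X = n := by
    obtain ⟨X, f, hf⟩ := hM
    exact ⟨_, X, f, hf, rfl⟩
  obtain ⟨X, f, hf, hμ⟩ := Nat.find_spec hex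
  refine ⟨X, f, hf, fun θ hθ => ?_⟩
  have := h𝒳.finite X hf.1
  obtain ⟨N, C, hNC, h1, h2⟩ := henselian_fitting θ
  apply h2
  by_contra hN
  have hfN : ∀ x ∈ N, f x = 0 := by
    intro x hx
    obtain ⟨y, rfl⟩ := h1 x hx
    rw [map_sub, sub_eq_zero]
    exact congr($hθ y).symm
  let e := Submodule.prodEquivOfIsCompl N C hNC
  have hlt : μ (ModuleCat.of R C) < μ X := by
    let e2 := (TensorProduct.AlgebraTensorModule.congr
      (LinearEquiv.refl (ResidueField R) (ResidueField R)) e.symm).trans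
      (TensorProduct.prodRight R (ResidueField R) (ResidueField R) N C)
    have : μ X = Module.finrank (ResidueField R) (TensorProduct R (ResidueField R) N) + 
        μ (ModuleCat.of R C) := by
      change Module.finrank _ _ = _ + Module.finrank _ _
      rw [e2.finrank_eq, Module.finrank_prod]
    rw [this]
    have : Nontrivial N := Submodule.nontrivial_iff_ne_bot.2 hN
    have : Nontrivial (TensorProduct R (ResidueField R) N) := by
      by_contra h
      rw [not_nontrivial_iff_subsingleton, IsLocalRing.subsingleton_tensorProduct] at h
      exact not_nontrivial N this
    have : 0 < Module.finrank (ResidueField R) (TensorProduct R (ResidueField R) N) :=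
      Module.finrank_pos
    omega
  rw [hμ] at hlt
  apply Nat.find_min hex hlt
  refine ⟨ModuleCat.of R C, f ∘ₗ C.subtype, ⟨?_, ?_⟩, rfl⟩
  · apply h𝒳.summandClosed (ModuleCat.of R C) (ModuleCat.of R N)
    exact h𝒳.isoClosed hf.1 (e.symm.trans (LinearEquiv.prodComm R N C))
  · intro W hW g
    obtain ⟨h, hh⟩ := hf.2 W hW g
    refine ⟨LinearMap.snd R N C ∘ₗ e.symm.toLinearMap ∘ₗ h, ?_⟩
    ext w
    have h3 : h w = (e.symm (h w)).1 + (e.symm (h w)).2 := by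
      conv_lhs => rw [← e.apply_symm_apply (h w)]
      simp [e]
    have h4 := congr($hh w)
    simp only [LinearMap.comp_apply] at h4 ⊢
    rw [h3, map_add, hfN _ (e.symm (h w)).1.2, zero_add] at h4
    exact h4
end Fitting
section Wak

lemma wakamatsu_s14 {R : Type u} [CommRing R] (𝒳 : Set (ModuleCat.{u} R)) (h𝒳 : IsResolving R 𝒳)
    {M X : ModuleCat.{u} R} (f : X →ₗ[R] M) (hf : IsRightApprox R 𝒳 f)
    (hmin : ∀ θ : X →ₗ[R] X, f ∘ₗ θ = f → Function.Bijective θ)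
    {K F W : Type u} [AddCommGroup K] [AddCommGroup F] [AddCommGroup W] [Module R K] [Module R F]
    [Module R W] (hW : ModuleCat.of R W ∈ 𝒳) (i : K →ₗ[R] F) (p : F →ₗ[R] W)
    (hi : Function.Injective i) (hip : Function.Exact i p) (hp : Function.Surjective p)
    (u : K →ₗ[R] LinearMap.ker f) : ∃ v : F →ₗ[R] LinearMap.ker f, v ∘ₗ i = u := by
  let j : K →ₗ[R] (X × F) := LinearMap.prod (-((LinearMap.ker f).subtype ∘ₗ u)) i
  let S := LinearMap.range j
  let Z := (X × F) ⧸ S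
  let α : X →ₗ[R] Z := S.mkQ ∘ₗ LinearMap.inl R X F
  let β : Z →ₗ[R] W := S.liftQ (p ∘ₗ LinearMap.snd R X F) (by
    rintro _ ⟨k, rfl⟩
    simpa [j] using hip.apply_apply_eq_zero k)
  let γ : Z →ₗ[R] M := S.liftQ (f ∘ₗ LinearMap.fst R X F) (by
    rintro _ ⟨k, rfl⟩
    simp [j])
  have hSES : IsSES R (A := X) (B := ModuleCat.of R Z) (C := ModuleCat.of R W) α β := by
    refine ⟨?_, ?_, ?_⟩
    · rw [injective_iff_map_eq_zero]
      intro x hx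
      have : ((x, 0) : X × F) ∈ S := (Submodule.Quotient.mk_eq_zero S).1 hx
      obtain ⟨k, hk⟩ := this
      have h1 : i k = 0 := congr(Prod.snd $hk)
      have h2 : k = 0 := hi (by simpa using h1)
      have h3 : j k = 0 := by rw [h2, map_zero]
      rw [h3] at hk
      exact congr(Prod.fst $hk).symm
    · intro z
      constructor
      · obtain ⟨⟨x, y⟩, rfl⟩ := S.mkQ_surjective z
        intro hz
        have hy : p y = 0 := hz
        obtain ⟨k, rfl⟩ := (hip y).1 hy
        refine ⟨x + u k, ?_⟩
        change S.mkQ (x + u k, 0) = S.mkQ (x, i k)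
        rw [← sub_eq_zero, ← map_sub]
        refine (Submodule.Quotient.mk_eq_zero S).2 ⟨-k, ?_⟩
        simp [j]
      · rintro ⟨x, rfl⟩
        change p 0 = 0
        simp
    · intro w
      obtain ⟨y, rfl⟩ := hp w
      exact ⟨S.mkQ (0, y), rfl⟩
  have hZ : ModuleCat.of R Z ∈ 𝒳 := h𝒳.extClosed _ _ _ _ _ hSES hf.1 hW
  obtain ⟨h, hh⟩ := hf.2 _ hZ γ
  let θ : X →ₗ[R] X := h ∘ₗ α
  have hθ : f ∘ₗ θ = f := by
    ext x
    exact congr($hh (α x))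
  let e := LinearEquiv.ofBijective θ (hmin θ hθ)
  have hfe : ∀ x, f (e.symm x) = f x := by
    intro x
    conv_rhs => rw [← e.apply_symm_apply x]
    exact congr($hθ (e.symm x)).symm
  let r : F →ₗ[R] X := e.symm.toLinearMap ∘ₗ h ∘ₗ S.mkQ ∘ₗ LinearMap.inr R X F
  refine ⟨r.codRestrict _ ?_, ?_⟩
  · intro y
    change f (e.symm _) = 0
    rw [hfe]
    refine (congr($hh (S.mkQ (0, y)))).trans ?_
    change f 0 = 0
    simp
  · ext k
    change e.symm (h (S.mkQ (0, i k))) = (u k : X)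
    rw [LinearEquiv.symm_apply_eq]
    change h _ = h (S.mkQ (u k, 0))
    congr 1
    rw [← sub_eq_zero, ← map_sub]
    exact (Submodule.Quotient.mk_eq_zero S).2 ⟨k, by simp [j]⟩

end Wak

section ExtPart

lemma extVanish_of_subsingleton {R : Type u} [CommRing R] (W Y : ModuleCat.{u} R) (n : ℕ)
    (h : Subsingleton (Abelian.Ext W Y (n + 1))) : ExtVanish R (n + 1) W Y := by
  let P := projectiveResolution W
  let e := P.isoExt (R := R) (n + 1) Y
  suffices hz : Limits.IsZero ((P.complex.linearYonedaObj R Y).homology (n + 1)) from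
    ModuleCat.subsingleton_of_isZero (hz.of_iso e)
  rw [← HomologicalComplex.exactAt_iff_isZero_homology,
    HomologicalComplex.exactAt_iff' _ n (n + 1) (n + 2) (by simp) (by simp),
    ShortComplex.moduleCat_exact_iff]
  intro (x : P.complex.X (n + 1) ⟶ Y) hx
  have hx' : P.complex.d (n + 2) (n + 1) ≫ x = 0 := hx
  obtain ⟨g, hg⟩ := (P.extMk_eq_zero_iff x (n + 2) rfl hx' n rfl).1 (Subsingleton.elim _ _)
  exact ⟨g, hg⟩

lemma ext_subsingleton {R : Type u} [CommRing R] [IsNoetherianRing R]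
    (𝒳 : Set (ModuleCat.{u} R)) (h𝒳 : IsResolving R 𝒳)
    {M X : ModuleCat.{u} R} (f : X →ₗ[R] M) (hf : IsRightApprox R 𝒳 f)
    (hmin : ∀ θ : X →ₗ[R] X, f ∘ₗ θ = f → Function.Bijective θ) (n : ℕ) (W : ModuleCat.{u} R)
    (hW : W ∈ 𝒳) :
    Subsingleton (Abelian.Ext W (ModuleCat.of R (LinearMap.ker f)) (n + 1)) := by
  induction n generalizing W with
  | zero =>
    have := h𝒳.finite W hW
    obtain ⟨F, _, _, _, _, p, hp⟩ := Module.exists_finite_presentation R W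
    let exac := LinearMap.shortExact_shortComplexKer hp
    refine subsingleton_of_forall_eq 0 fun x => ?_
    obtain ⟨u, rfl⟩ := precomp_extClass_surjective_of_projective_X₂ 
      (ModuleCat.of R (LinearMap.ker f)) exac 0 x
    obtain ⟨u, rfl⟩ := (Abelian.Ext.homEquiv₀ (C := ModuleCat.{u} R)).symm.surjective u
    obtain ⟨v, hv⟩ := wakamatsu_s14 𝒳 h𝒳 f hf hmin hW (LinearMap.ker p).subtype p
      (LinearMap.ker p).injective_subtype p.exact_subtype_ker_map hp u.hom
    have hu : u = p.shortComplexKer.f ≫ ModuleCat.ofHom v := by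
      ext1; exact hv.symm
    rw [hu]
    have e : (Abelian.Ext.homEquiv₀ (C := ModuleCat.{u} R)).symm
        (p.shortComplexKer.f ≫ ModuleCat.ofHom v) =
        (Abelian.Ext.mk₀ p.shortComplexKer.f).comp
          (Abelian.Ext.mk₀ (ModuleCat.ofHom v)) (zero_add 0) :=
      (Abelian.Ext.mk₀_comp_mk₀ _ _).symm
    rw [e]
    exact exac.extClass_comp_assoc _ (h := add_comm 1 0)
  | succ n ih =>
    have := h𝒳.finite W hW
    obtain ⟨F, _, _, _, _, p, hp⟩ := Module.exists_finite_presentation R W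
    let exac := LinearMap.shortExact_shortComplexKer hp
    have : Subsingleton (Abelian.Ext p.shortComplexKer.X₁ (ModuleCat.of R (LinearMap.ker f)) (n + 1)) := by
      apply ih
      refine h𝒳.kerClosed (ModuleCat.of R (LinearMap.ker p)) (ModuleCat.of R F) W 
        (LinearMap.ker p).subtype p 
        ⟨(LinearMap.ker p).injective_subtype, p.exact_subtype_ker_map, hp⟩ ?_ hW
      exact h𝒳.freeMem _ ‹_› ‹_›
    exact (precomp_extClass_surjective_of_projective_X₂ 
      (ModuleCat.of R (LinearMap.ker f)) exac (n + 1)).subsingleton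

end ExtPart

/-- Over a henselian Gorenstein local ring, if every module in `𝒳^⊥`
admits a right `𝒳`-approximation, then `𝒳` is coherent. -/
theorem stmt14 (R : Type u) [CommRing R] [IsNoetherianRing R] [IsLocalRing R]
    [HenselianLocalRing R] (hG : IsGorensteinLocalRing R)
    (𝒳 : Set (ModuleCat.{u} R)) (h𝒳 : IsResolving R 𝒳)
    (h : ∀ Y ∈ XPerp R 𝒳, HasRightApprox R 𝒳 Y) :
    Coherent R 𝒳 := by
  intro M _
  constructor
  · rintro ⟨X₀, X₁, g, f, h₀, h₁, hW⟩
    exact ⟨X₀, f, h₀, fun W hw => (hW W hw).1⟩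
  · intro hM
    obtain ⟨X, f, hf, hmin⟩ := exists_minimal_approx 𝒳 h𝒳 M hM
    have := h𝒳.finite X hf.1
    have hY : ModuleCat.of R (LinearMap.ker f) ∈ XPerp R 𝒳 := by
      refine ⟨inferInstanceAs (Module.Finite R (LinearMap.ker f)), fun W hW i hi => ?_⟩
      obtain ⟨n, rfl⟩ := Nat.exists_eq_succ_of_ne_zero hi.ne'
      exact extVanish_of_subsingleton _ _ n (ext_subsingleton 𝒳 h𝒳 f hf hmin n W hW)
    obtain ⟨X₁, g, hg⟩ := h _ hY
    refine ⟨X, X₁, (LinearMap.ker f).subtype ∘ₗ g, f, hf.1, hg.1, fun W hW => 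
      ⟨hf.2 W hW, fun a => ⟨fun ha => ?_, ?_⟩⟩⟩
    · obtain ⟨b, hb⟩ := hg.2 W hW (a.codRestrict (LinearMap.ker f) fun w => congr($ha w))
      refine ⟨b, ?_⟩
      ext w
      exact congr(($hb w : X))
    · rintro ⟨b, rfl⟩
      ext w
      exact (g (b w)).2
end

section
/- Let R be a henselian Gorenstein Noetherian local ring and 𝒳 a resolving subcategory of the category of finitely generated R-modules. If 𝒳^⊥ is closed under syzygies (i.e. 𝒳^⊥ contains all finitely generated free R-modules, and for every Y ∈ 𝒳^⊥ and every surjection F → Y with F finitely generated free, the kernel belongs to 𝒳^⊥), then every module in 𝒳^⊥ admits a right 𝒳-approximation. -/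
open CategoryTheory IsLocalRing

universe u

open CategoryTheory in
theorem ext_one_factor (R : Type u) [CommRing R] (W K : ModuleCat.{u} R)
    (h : ExtVanish R 1 W K) (P : ProjectiveResolution W) (b : P.complex.X 1 ⟶ K)
    (hb : P.complex.d 2 1 ≫ b = 0) : ∃ c : P.complex.X 0 ⟶ K, P.complex.d 1 0 ≫ c = b := by
  have h0 : Limits.IsZero ((P.complex.linearYonedaObj R K).homology 1) := by
    refine Limits.IsZero.of_iso ?_ (P.isoExt (R := R) 1 K).symm
    have : Subsingleton (ExtMod R 1 W K) := h
    exact ModuleCat.isZero_of_subsingleton _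
  rw [← HomologicalComplex.exactAt_iff_isZero_homology,
    HomologicalComplex.exactAt_iff' _ 0 1 2 (by simp) (by simp),
    ShortComplex.moduleCat_exact_iff] at h0
  obtain ⟨c, hc⟩ := h0 b hb
  exact ⟨c, hc⟩

open CategoryTheory in
theorem ext_one_lift (R : Type u) [CommRing R] (W F Y : ModuleCat.{u} R) (f : F →ₗ[R] Y)
    (hf : Function.Surjective f)
    (h : ExtVanish R 1 W (ModuleCat.of R (LinearMap.ker f))) (g : W →ₗ[R] Y) :
    ∃ k : W →ₗ[R] F, f ∘ₗ k = g := by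
  obtain ⟨P⟩ := (inferInstance : HasProjectiveResolution W).out
  let fc : F ⟶ Y := ModuleCat.ofHom f
  let gc : W ⟶ Y := ModuleCat.ofHom g
  let p : P.complex.X 0 ⟶ W := P.π.f 0
  have hdp : P.complex.d 1 0 ≫ p = 0 := P.complex_d_comp_π_f_zero
  have hp : Epi p := inferInstanceAs (Epi (P.π.f 0))
  have hfe : Epi fc := (ModuleCat.epi_iff_surjective _).2 hf
  let i : ModuleCat.of R (LinearMap.ker f) ⟶ F := ModuleCat.ofHom (LinearMap.ker f).subtype
  have hi : Mono i := (ModuleCat.mono_iff_injective _).2 (Subtype.val_injective)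
  have hif : i ≫ fc = 0 := by
    ext x
    exact x.2
  let a : P.complex.X 0 ⟶ F := Projective.factorThru (p ≫ gc) fc
  have ha : a ≫ fc = p ≫ gc := Projective.factorThru_comp _ _
  have hda : (P.complex.d 1 0 ≫ a) ≫ fc = 0 := by
    rw [Category.assoc, ha, ← Category.assoc, hdp, Limits.zero_comp]
  let b : P.complex.X 1 ⟶ ModuleCat.of R (LinearMap.ker f) :=
    ModuleCat.ofHom (LinearMap.codRestrict (LinearMap.ker f) (P.complex.d 1 0 ≫ a).hom
      (fun x => by
        have := congrArg (fun t => t.hom x) hda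
        exact this))
  have hb : b ≫ i = P.complex.d 1 0 ≫ a := by
    ext x
    rfl
  obtain ⟨c, hc⟩ := ext_one_factor R W _ h P b (by
    rw [← cancel_mono i, Category.assoc, hb, ← Category.assoc, P.complex.d_comp_d]
    simp)
  have hz : P.complex.d 1 0 ≫ (a - c ≫ i) = 0 := by
    rw [Preadditive.comp_sub, ← Category.assoc, hc, hb, sub_self]
  let k : W ⟶ F := P.isColimitCokernelCofork.desc (Limits.CokernelCofork.ofπ _ hz)
  have hk : p ≫ k = a - c ≫ i :=
    P.isColimitCokernelCofork.fac (Limits.CokernelCofork.ofπ _ hz) Limits.WalkingParallelPair.one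
  have hkf : k ≫ fc = gc := by
    rw [← cancel_epi p, ← Category.assoc, hk, Preadditive.sub_comp, ha, Category.assoc, hif]
    simp
  exact ⟨k.hom, congrArg ModuleCat.Hom.hom hkf⟩

/-- Over a henselian Gorenstein local ring, if `𝒳^⊥` is closed under
syzygies, then every module in `𝒳^⊥` admits a right `𝒳`-approximation. -/
theorem stmt15 (R : Type u) [CommRing R] [IsNoetherianRing R] [IsLocalRing R]
    [HenselianLocalRing R] (hG : IsGorensteinLocalRing R)
    (𝒳 : Set (ModuleCat.{u} R)) (h𝒳 : IsResolving R 𝒳)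
    (hfree : ∀ F : ModuleCat.{u} R, Module.Finite R F → Module.Free R F → F ∈ XPerp R 𝒳)
    (hsyz : ∀ Y ∈ XPerp R 𝒳, ∀ (F : ModuleCat.{u} R) (f : ↥F →ₗ[R] ↥Y),
      Module.Finite R F → Module.Free R F → Function.Surjective f →
        ModuleCat.of R ↥(LinearMap.ker f) ∈ XPerp R 𝒳) :
    ∀ Y ∈ XPerp R 𝒳, HasRightApprox R 𝒳 Y := by
  intro Y hY
  have hYf : Module.Finite R Y := hY.1
  obtain ⟨n, f, hf⟩ := Module.Finite.exists_fin' R Y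
  let F : ModuleCat.{u} R := ModuleCat.of R (Fin n → R)
  have hFf : Module.Finite R F := inferInstanceAs (Module.Finite R (Fin n → R))
  have hFr : Module.Free R F := inferInstanceAs (Module.Free R (Fin n → R))
  refine ⟨F, f, h𝒳.freeMem F hFf hFr, fun W hW g => ?_⟩
  exact ext_one_lift R W F Y f hf ((hsyz Y hY F f hFf hFr hf).2 W hW 1 one_pos) g
end

section
/- Let R be a henselian Gorenstein Noetherian local ring and 𝒳 a resolving subcategory of the category of finitely generated R-modules. If 𝒳 is contravariantly finite or contravariantly infinite, then 𝒳 is coherent. -/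
open CategoryTheory IsLocalRing

universe u

/-- Over a henselian Gorenstein local ring, a resolving subcategory that
is contravariantly finite or contravariantly infinite is coherent. -/
theorem stmt16 (R : Type u) [CommRing R] [IsNoetherianRing R] [IsLocalRing R]
    [HenselianLocalRing R] (hG : IsGorensteinLocalRing R)
    (𝒳 : Set (ModuleCat.{u} R)) (h𝒳 : IsResolving R 𝒳)
    (h : ContravariantlyFinite R 𝒳 ∨ ContravariantlyInfinite R 𝒳) :
    Coherent R 𝒳 := by
  intro M hM
  constructor
  · rintro ⟨X₀, X₁, g, f, h0, h1, H⟩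
    exact ⟨X₀, f, h0, fun W hW k => (H W hW).1 k⟩
  · intro hA
    rcases h with h | h
    · obtain ⟨X, f, hX, hf⟩ := hA
      have hXf : Module.Finite R X := h𝒳.finite X hX
      have hK : Module.Finite R (LinearMap.ker f) := inferInstance
      obtain ⟨Y, p, hY, hp⟩ := h (ModuleCat.of R (LinearMap.ker f)) hK
      refine ⟨X, Y, (LinearMap.ker f).subtype ∘ₗ p, f, hX, hY, fun W hW => ⟨fun k => hf W hW k, ?_⟩⟩
      intro k
      constructor
      · intro hk
        have hk' : ∀ w, k w ∈ LinearMap.ker f := fun w => LinearMap.congr_fun hk w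
        obtain ⟨q, hq⟩ := hp W hW (LinearMap.codRestrict (LinearMap.ker f) k hk')
        refine ⟨q, ?_⟩
        ext w
        exact congrArg Subtype.val (LinearMap.congr_fun hq w)
      · rintro ⟨q, rfl⟩
        ext w
        exact (p (q w)).2
    · have hMX : M ∈ 𝒳 := by
        by_contra hn
        exact h M hM hn hA
      refine ⟨M, ModuleCat.of R PUnit.{u+1}, 0, LinearMap.id, hMX,
        h𝒳.freeMem _ (inferInstanceAs (Module.Finite R PUnit.{u+1}))
          (inferInstanceAs (Module.Free R PUnit.{u+1})), fun W hW => ⟨fun k => ⟨k, rfl⟩, ?_⟩⟩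
      intro k
      constructor
      · intro hk
        exact ⟨0, hk.symm⟩
      · rintro ⟨q, rfl⟩
        rfl
end

section
/- Let R be a henselian Gorenstein Noetherian local ring satisfying the Auslander–Reiten condition (ARC). Let 𝒳 be a resolving subcategory of the category of finitely generated R-modules all of whose members are maximal Cohen–Macaulay, and suppose 𝒳 satisfies condition (A): for every X ∈ 𝒳 there is a short exact sequence 0 → X → Y → X′ → 0 of finitely generated R-modules with X′ ∈ 𝒳 and Y ∈ 𝒳 ∩ 𝒳^⊥. Then 𝒳 is coherent. -/
open CategoryTheory IsLocalRing

universe u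

section helpers

variable {R : Type u} [CommRing R]

lemma extVanish_iff_exact {M N : ModuleCat.{u} R} (P : ProjectiveResolution M) (i : ℕ) :
    ExtVanish R i M N ↔ (P.complex.linearYonedaObj R N).ExactAt i := by
  rw [HomologicalComplex.exactAt_iff_isZero_homology, ExtVanish,
    ← ModuleCat.isZero_iff_subsingleton]
  exact (P.isoExt i N).isZero_iff

lemma extVanish_succ_iff {M N : ModuleCat.{u} R} (i : ℕ) :
    ExtVanish R (i+1) M N ↔ Subsingleton (Abelian.Ext M N (i+1)) := by
  let P := projectiveResolution M
  rw [extVanish_iff_exact P, HomologicalComplex.exactAt_iff' _ i (i+1) (i+2) (by simp) (by simp),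
    ShortComplex.moduleCat_exact_iff]
  constructor
  · intro h
    refine subsingleton_of_forall_eq 0 fun α => ?_
    obtain ⟨f, hf, rfl⟩ := P.extMk_surjective α (i+2) rfl
    rw [P.extMk_eq_zero_iff f (i+2) rfl hf i rfl]
    obtain ⟨g, hg⟩ := h f hf
    exact ⟨g, hg⟩
  · intro h f hf
    have := Subsingleton.elim (P.extMk f (i+2) rfl hf) 0
    rw [P.extMk_eq_zero_iff f (i+2) rfl hf i rfl] at this
    exact this

lemma extVanish_zero {M N : ModuleCat.{u} R} (h : ExtVanish R 0 M N) :
    Subsingleton (M →ₗ[R] N) := by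
  let P := projectiveResolution M
  rw [extVanish_iff_exact P, HomologicalComplex.exactAt_iff' _ 0 0 1 (by simp) (by simp),
    ShortComplex.moduleCat_exact_iff] at h
  refine subsingleton_of_forall_eq 0 fun g => ?_
  obtain ⟨g', hg'⟩ : ∃ g' : ((ChainComplex.single₀ (ModuleCat R)).obj M).X 0 ⟶ N,
    g' = ModuleCat.ofHom g := ⟨ModuleCat.ofHom g, rfl⟩
  have h1 : P.complex.d 1 0 ≫ (P.π.f 0 ≫ g') = 0 := by
    rw [← Category.assoc, P.complex_d_comp_π_f_zero, Limits.zero_comp]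
  obtain ⟨x, hx⟩ := h (P.π.f 0 ≫ g') h1
  obtain ⟨x', hx'⟩ : ∃ x' : P.complex.X 0 ⟶ N, x' = x := ⟨x, rfl⟩
  have h2 : P.complex.d 0 0 ≫ x' = P.π.f 0 ≫ g' := by
    rw [hx']; exact hx
  rw [P.complex.shape 0 0 (by simp), Limits.zero_comp] at h2
  have h3 : g' = 0 := by
    rw [← cancel_epi (P.π.f 0), ← h2, Limits.comp_zero]
  exact congrArg ModuleCat.Hom.hom (hg'.symm.trans h3)

lemma subsingleton_ext_zero {M N : ModuleCat.{u} R} [h : Subsingleton (M →ₗ[R] N)] :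
    Subsingleton (Abelian.Ext M N 0) :=
  (Abelian.Ext.linearEquiv₀ (R := R).trans ModuleCat.homLinearEquiv).toEquiv.subsingleton

/-- vanishing of Abelian.Ext -/
def EV (i : ℕ) (M N : ModuleCat.{u} R) : Prop := Subsingleton (Abelian.Ext M N i)

lemma EV.contra₂ {S : ShortComplex (ModuleCat.{u} R)} (hS : S.ShortExact) {N : ModuleCat.{u} R}
    {i : ℕ} (h1 : EV i S.X₁ N) (h3 : EV i S.X₃ N) : EV i S.X₂ N := by
  refine subsingleton_of_forall_eq 0 fun α => ?_
  obtain ⟨x, rfl⟩ := Abelian.Ext.contravariant_sequence_exact₂ hS N α (h1.elim _ _)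
  rw [h3.elim x 0, Abelian.Ext.comp_zero]

lemma EV.contra₁ {S : ShortComplex (ModuleCat.{u} R)} (hS : S.ShortExact) {N : ModuleCat.{u} R}
    {i : ℕ} (h2 : EV i S.X₂ N) (h3 : EV (i+1) S.X₃ N) : EV i S.X₁ N := by
  refine subsingleton_of_forall_eq 0 fun α => ?_
  obtain ⟨x, rfl⟩ := Abelian.Ext.contravariant_sequence_exact₁ hS N α (add_comm 1 i) (h3.elim _ _)
  rw [h2.elim x 0, Abelian.Ext.comp_zero]

lemma EV.contra₃ {S : ShortComplex (ModuleCat.{u} R)} (hS : S.ShortExact) {N : ModuleCat.{u} R}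
    {i : ℕ} (h1 : EV i S.X₁ N) (h2 : EV (i+1) S.X₂ N) : EV (i+1) S.X₃ N := by
  refine subsingleton_of_forall_eq 0 fun α => ?_
  obtain ⟨x, rfl⟩ := Abelian.Ext.contravariant_sequence_exact₃ hS N α (h2.elim _ _) (add_comm 1 i)
  rw [h1.elim x 0, Abelian.Ext.comp_zero]

lemma EV.co₂ {S : ShortComplex (ModuleCat.{u} R)} (hS : S.ShortExact) {N : ModuleCat.{u} R}
    {i : ℕ} (h1 : EV i N S.X₁) (h3 : EV i N S.X₃) : EV i N S.X₂ := by
  refine subsingleton_of_forall_eq 0 fun α => ?_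
  obtain ⟨x, rfl⟩ := Abelian.Ext.covariant_sequence_exact₂ N hS α (h3.elim _ _)
  rw [h1.elim x 0, Abelian.Ext.zero_comp]

lemma EV.co₃ {S : ShortComplex (ModuleCat.{u} R)} (hS : S.ShortExact) {N : ModuleCat.{u} R}
    {i : ℕ} (h2 : EV i N S.X₂) (h1 : EV (i+1) N S.X₁) : EV i N S.X₃ := by
  refine subsingleton_of_forall_eq 0 fun α => ?_
  obtain ⟨x, rfl⟩ := Abelian.Ext.covariant_sequence_exact₃ N hS α rfl (h1.elim _ _)
  rw [h2.elim x 0, Abelian.Ext.zero_comp]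

/-- short complex from linear maps -/
lemma exists_ses {A B C : Type u} [AddCommGroup A] [Module R A] [AddCommGroup B] [Module R B]
    [AddCommGroup C] [Module R C] (f : A →ₗ[R] B) (g : B →ₗ[R] C)
    (hf : Function.Injective f) (hg : Function.Surjective g) (h : Function.Exact f g) :
    (ModuleCat.shortComplexOfCompEqZero f g h.linearMap_comp_eq_zero).ShortExact where
  exact := ModuleCat.shortComplex_exact _ h
  mono_f := by simpa [ModuleCat.mono_iff_injective] using! hf
  epi_g := by simpa [ModuleCat.epi_iff_surjective] using! hg

lemma EV.iso {A B N : ModuleCat.{u} R} (e : A ≃ₗ[R] B) {i : ℕ} (h : EV i A N) : EV i B N := by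
  refine subsingleton_of_forall_eq 0 fun α => ?_
  have : α = (Abelian.Ext.mk₀ e.toModuleIso.inv).comp
      ((Abelian.Ext.mk₀ e.toModuleIso.hom).comp α (zero_add i)) (zero_add i) := by
    rw [Abelian.Ext.mk₀_comp_mk₀_assoc, Iso.inv_hom_id, Abelian.Ext.mk₀_id_comp]
  rw [this, h.elim (Abelian.Ext.comp _ _ _) 0, Abelian.Ext.comp_zero]

/-- Nakayama step. -/
lemma EV.smul [IsNoetherianRing R] [IsLocalRing R] {M N : ModuleCat.{u} R} [Module.Finite R M]
    [Module.Finite R N] {x : R} (hx : x ∈ maximalIdeal R) (reg : IsSMulRegular M x) {i : ℕ}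
    (h : EV (i+1) (ModuleCat.of R (QuotSMulTop x M)) N) : EV i M N := by
  have hS := reg.smulShortComplex_shortExact
  have key : ∀ α : Abelian.Ext M N i, ∃ β : Abelian.Ext M N i, x • β = α := by
    intro α
    obtain ⟨β, hβ⟩ := Abelian.Ext.contravariant_sequence_exact₁ hS N α (add_comm 1 i) (h.elim _ _)
    refine ⟨β, ?_⟩
    rw [← hβ]
    have h1 : (M.smulShortComplex x).f = x • 𝟙 M := rfl
    obtain ⟨β', hβ'⟩ : ∃ β' : Abelian.Ext M N i, β' = β := ⟨β, rfl⟩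
    have h2 : x • β' = (Abelian.Ext.mk₀ (x • 𝟙 M)).comp β' (zero_add i) := by
      simp [Abelian.Ext.mk₀_smul]
    rw [hβ'] at h2
    exact h2
  have : (⊤ : Submodule R (Abelian.Ext M N i)) ≤ maximalIdeal R • ⊤ := by
    intro α _
    obtain ⟨β, rfl⟩ := key α
    exact Submodule.smul_mem_smul hx trivial
  have h0 := Submodule.eq_bot_of_le_smul_of_le_jacobson_bot (maximalIdeal R) _
    (Module.Finite.fg_top) this (IsLocalRing.maximalIdeal_le_jacobson _)
  exact (Submodule.subsingleton_iff R).mp (subsingleton_of_bot_eq_top h0.symm)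

lemma EV.free {F N : ModuleCat.{u} R} [Module.Free R F] (i : ℕ) : EV (i+1) F N := by
  have h : Module.Projective R F := Module.Projective.of_free
  have : Projective F := (IsProjective.iff_projective (R := R) F).mp h
  exact Abelian.Ext.subsingleton_of_projective ..

lemma finite_quot {M : ModuleCat.{u} R} [Module.Finite R M] (x : R) :
    Module.Finite R (QuotSMulTop x M) := inferInstance

lemma exists_reg [IsNoetherianRing R] [IsLocalRing R] {M : Type u} [AddCommGroup M] [Module R M]
    [Module.Finite R M] (h : Subsingleton (ResidueField R →ₗ[R] M)) :
    ∃ x ∈ maximalIdeal R, IsSMulRegular M x := by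
  have : Module.Finite R (ResidueField R) := inferInstance
  obtain ⟨r, hr, hr'⟩ := IsSMulRegular.subsingleton_linearMap_iff.mp h
  refine ⟨r, ?_, hr'⟩
  have := Module.mem_annihilator.mp hr (1 : ResidueField R)
  rw [Algebra.smul_def, mul_one] at this
  exact (IsLocalRing.residue_eq_zero_iff r).mp this

lemma exists_embed [IsNoetherianRing R] [IsLocalRing R] (e : ℕ) :
    ∀ (N : ModuleCat.{u} R) (_ : Module.Finite R N) (_ : Nontrivial N) (t : ℕ),
      Module.supportDim R N ≤ e → (∀ i, t < i → EV i N (ModuleCat.of R R)) →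
      ∃ N' : ModuleCat.{u} R, Module.Finite R N' ∧ ¬ Subsingleton (ResidueField R →ₗ[R] N') ∧
        ∀ i, t + e < i → EV i N' (ModuleCat.of R R) := by
  induction e with
  | zero =>
    intro N _ _ t hd hN
    by_cases h : Subsingleton (ResidueField R →ₗ[R] N)
    · obtain ⟨x, hx, reg⟩ := exists_reg h
      have h1 := Module.supportDim_quotSMulTop_succ_eq_supportDim reg hx
      have : Nontrivial (QuotSMulTop x N) := by
        exact nontrivial_quotSMulTop_of_mem_maximalIdeal N hx
      have h2 := Module.supportDim_ne_bot_of_nontrivial R (QuotSMulTop x N)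
      rw [← h1] at hd
      exfalso
      revert hd h2
      generalize Module.supportDim R (QuotSMulTop x N) = a
      intro hd h2
      induction a with
      | bot => exact h2 rfl
      | coe a =>
        have : (a + 1 : ℕ∞) ≤ (0 : ℕ) := by exact_mod_cast hd
        simp at this
    · exact ⟨N, ‹_›, h, hN⟩
  | succ e ih =>
    intro N _ _ t hd hN
    by_cases h : Subsingleton (ResidueField R →ₗ[R] N)
    · obtain ⟨x, hx, reg⟩ := exists_reg h
      have h1 := Module.supportDim_quotSMulTop_succ_eq_supportDim reg hx
      have : Nontrivial (QuotSMulTop x N) := by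
        exact nontrivial_quotSMulTop_of_mem_maximalIdeal N hx
      rw [← h1] at hd
      obtain ⟨N', hf, hk, h'⟩ := ih (ModuleCat.of R (QuotSMulTop x N)) (finite_quot x) this (t+1)
        (by
          revert hd
          change Module.supportDim R (QuotSMulTop x N) + 1 ≤ _ → Module.supportDim R (QuotSMulTop x N) ≤ _
          generalize Module.supportDim R (QuotSMulTop x N) = a
          intro hd
          induction a with
          | bot => exact bot_le
          | coe a =>
            have : (a + 1 : ℕ∞) ≤ (e + 1 : ℕ) := by exact_mod_cast hd
            have : a ≤ e := by
              push_cast at this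
              exact (ENat.add_le_add_iff_right (by simp)).mp this
            exact_mod_cast this)
        (by
          intro i hi
          obtain ⟨j, rfl⟩ : ∃ j, i = j + 1 := ⟨i-1, by omega⟩
          exact EV.contra₃ reg.smulShortComplex_shortExact (hN _ (by omega)) (hN _ (by omega)))
      exact ⟨N', hf, hk, fun i hi => h' i (by omega)⟩
    · exact ⟨N, ‹_›, h, fun i hi => hN i (by omega)⟩

lemma exists_mono_residue [IsLocalRing R] {N : Type u} [AddCommGroup N] [Module R N]
    (h : ¬ Subsingleton (ResidueField R →ₗ[R] N)) :
    ∃ f : ResidueField R →ₗ[R] N, Function.Injective f := by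
  rw [not_subsingleton_iff_nontrivial] at h
  obtain ⟨f, hf⟩ := exists_ne (0 : ResidueField R →ₗ[R] N)
  refine ⟨f, (injective_iff_map_eq_zero f).mpr fun a ha => ?_⟩
  by_contra hne
  apply hf
  ext b
  obtain ⟨r, hr⟩ := IsLocalRing.residue_surjective (b / a)
  have : b = r • a := by
    rw [Algebra.smul_def]
    change b = residue R r * a
    rw [hr, div_mul_cancel₀ _ hne]
  rw [this, map_smul, ha, smul_zero, LinearMap.zero_apply]

lemma gor_step [IsNoetherianRing R] [IsLocalRing R] {d : ℕ} (hd : ringKrullDim R = d) (j : ℕ)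
    (hj : d ≤ j) (h : ∀ M : ModuleCat.{u} R, Module.Finite R M → EV (j+2) M (ModuleCat.of R R)) :
    ∀ M : ModuleCat.{u} R, Module.Finite R M → EV (j+1) M (ModuleCat.of R R) := by
  have hk : EV (j+1) (ModuleCat.of R (ResidueField R)) (ModuleCat.of R R) := by
    obtain ⟨N', hf, hk, h'⟩ := exists_embed d (ModuleCat.of R R) (Module.Finite.self R)
      (inferInstanceAs (Nontrivial R)) 0
      (by rw [← hd]; exact (Module.supportDim_self_eq_ringKrullDim (R := R)).le)
      (by
        intro i hi
        obtain ⟨j, rfl⟩ : ∃ j, i = j + 1 := ⟨i-1, by omega⟩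
        have : Module.Free R (ModuleCat.of R R) := Module.Free.self R
        exact EV.free j)
    obtain ⟨f, hf⟩ := exists_mono_residue hk
    exact EV.contra₁ (exists_ses f (LinearMap.range f).mkQ hf (Submodule.mkQ_surjective _)
      (LinearMap.exact_map_mkQ_range f)) (h' _ (by omega))
      (h (ModuleCat.of R (N' ⧸ LinearMap.range f)) (inferInstance))
  intro M hM
  refine IsNoetherianRing.induction_on_isQuotientEquivQuotientPrime R (M := M) hM
    (motive := fun N _ _ _ => EV (j+1) (ModuleCat.of R N) (ModuleCat.of R R)) ?_ ?_ ?_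
  · intro N _ _ _ _
    have : Module.Free R (ModuleCat.of R N) := Module.Free.of_subsingleton R N
    exact EV.free j
  · intro N _ _ _ p e
    refine EV.iso (A := ModuleCat.of R (R ⧸ p.1)) e.symm ?_
    by_cases hp : p.1 = maximalIdeal R
    · rw [hp]; exact hk
    · obtain ⟨x, hx, hxp⟩ : ∃ x ∈ maximalIdeal R, x ∉ p.1 := by
        by_contra! hcon
        exact hp (le_antisymm (IsLocalRing.le_maximalIdeal p.2.ne_top) hcon)
      have reg : IsSMulRegular (R ⧸ p.1) x := by
        intro a b hab
        obtain ⟨a, rfl⟩ := Ideal.Quotient.mk_surjective a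
        obtain ⟨b, rfl⟩ := Ideal.Quotient.mk_surjective b
        simp only [Algebra.smul_def, Ideal.Quotient.algebraMap_eq, ← map_mul] at hab
        rw [Ideal.Quotient.eq, ← mul_sub] at hab
        exact Ideal.Quotient.eq.mpr ((p.2.mem_or_mem hab).resolve_left hxp)
      have hfin : Module.Finite R (ModuleCat.of R (R ⧸ p.1)) := inferInstanceAs (Module.Finite R (R ⧸ p.1))
      have hfin' : Module.Finite R (ModuleCat.of R R) := inferInstanceAs (Module.Finite R R)
      exact EV.smul hx reg (h _ (finite_quot x))
  · intro A _ _ _ B _ _ _ C _ _ _ f g hf hg hfg hA hC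
    exact EV.contra₂ (exists_ses f g hf hg hfg) hA hC

lemma gor_dim [IsNoetherianRing R] [IsLocalRing R] (hG : IsGorensteinLocalRing R)
    {d : ℕ} (hd : ringKrullDim R = d) (i : ℕ) (hi : d < i) (M : ModuleCat.{u} R)
    (hM : Module.Finite R M) : EV i M (ModuleCat.of R R) := by
  obtain ⟨n, hn⟩ := hG
  have key : ∀ m j, n < j + m → d < j → ∀ M : ModuleCat.{u} R, Module.Finite R M →
      EV j M (ModuleCat.of R R) := by
    intro m
    induction m with
    | zero =>
      intro j h1 h2 M hM
      obtain ⟨j, rfl⟩ : ∃ j', j = j' + 1 := ⟨j-1, by omega⟩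
      exact (extVanish_succ_iff j).mp (hn M hM _ h1)
    | succ m ih =>
      intro j h1 h2
      obtain ⟨j, rfl⟩ : ∃ j', j = j' + 1 := ⟨j-1, by omega⟩
      exact gor_step hd j (by omega) (ih (j+2) (by omega) (by omega))
  exact key (n+1) i (by omega) hi M hM

lemma mcm_aux [IsNoetherianRing R] [IsLocalRing R] {d : ℕ}
    (h : ∀ i, d < i → ∀ M : ModuleCat.{u} R, Module.Finite R M → EV i M (ModuleCat.of R R)) (t : ℕ) :
    ∀ M : ModuleCat.{u} R, Module.Finite R M →
      (∀ i, i < t → EV i (ModuleCat.of R (ResidueField R)) M) →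
      ∀ i, d < i + t → EV i M (ModuleCat.of R R) := by
  induction t with
  | zero => intro M hM _ i hi; exact h i hi M hM
  | succ t ih =>
    intro M hM hk i hi
    have h0 : Subsingleton (ResidueField R →ₗ[R] M) := by
      have := hk 0 (by omega)
      have e := (Abelian.Ext.linearEquiv₀ (R := R) (X := ModuleCat.of R (ResidueField R)) (Y := M)).trans
        ModuleCat.homLinearEquiv
      have : Subsingleton (Abelian.Ext (ModuleCat.of R (ResidueField R)) M 0) := this
      exact e.symm.toEquiv.subsingleton
    obtain ⟨x, hx, reg⟩ := exists_reg h0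
    have hfin' : Module.Finite R (ModuleCat.of R R) := inferInstanceAs (Module.Finite R R)
    refine EV.smul hx reg (ih _ (finite_quot x) ?_ (i+1) (by omega))
    intro l hl
    exact EV.co₃ reg.smulShortComplex_shortExact (hk l (by omega)) (hk (l+1) (by omega))

lemma mcm_ext [IsNoetherianRing R] [IsLocalRing R] (hG : IsGorensteinLocalRing R)
    (M : ModuleCat.{u} R) (hM : Module.Finite R M) (h : IsMCM R M) (i : ℕ) (hi : 0 < i) :
    EV i M (ModuleCat.of R R) := by
  obtain ⟨d, hd⟩ : ∃ d : ℕ, ringKrullDim R = d := by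
    have h1 : ringKrullDim R ≠ ⊤ := ringKrullDim_ne_top
    have h2 : ringKrullDim R ≠ ⊥ := ringKrullDim_ne_bot
    revert h1 h2
    generalize ringKrullDim R = a
    intro h1 h2
    induction a with
    | bot => exact absurd rfl h2
    | coe a =>
      induction a with
      | top => exact absurd rfl h1
      | coe a => exact ⟨a, rfl⟩
  refine mcm_aux (fun i hi M hM => gor_dim hG hd i hi M hM) d M hM ?_ i (by omega)
  intro l hl
  have hv : ExtVanish R l (ModuleCat.of R (ResidueField R)) M := by
    by_contra hcon
    have h1 : moduleDepth R M ≤ l := sInf_le ⟨l, hcon, rfl⟩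
    have h2 : (d : ℕ∞) ≤ moduleDepth R M := by
      unfold IsMCM at h
      rw [hd] at h
      exact_mod_cast h
    have := h2.trans h1
    have : d ≤ l := by exact_mod_cast this
    omega
  cases l with
  | zero =>
    have := extVanish_zero hv
    exact subsingleton_ext_zero
  | succ l => exact (extVanish_succ_iff l).mp hv

lemma arc_free [IsNoetherianRing R] [IsLocalRing R] (hG : IsGorensteinLocalRing R)
    (hARC : ∀ M : ModuleCat.{u} R, Module.Finite R M →
      (∀ i, 0 < i → ExtVanish R i M (ModuleCat.of R (↥M × R))) → Module.Free R M)
    (Y : ModuleCat.{u} R) (hf : Module.Finite R Y) (hM : IsMCM R Y)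
    (hY : ∀ i, 0 < i → ExtVanish R i Y Y) : Module.Free R Y := by
  refine hARC Y hf fun i hi => ?_
  have h1 := mcm_ext hG Y hf hM i hi
  have h2 := hY i hi
  obtain ⟨i, rfl⟩ : ∃ j, i = j + 1 := ⟨i-1, by omega⟩
  rw [extVanish_succ_iff] at h2 ⊢
  exact EV.co₂ (exists_ses (LinearMap.inl R Y R) (LinearMap.snd R Y R)
    LinearMap.inl_injective LinearMap.snd_surjective Function.Exact.inl_snd) h2 h1

lemma resol_prod {𝒳 : Set (ModuleCat.{u} R)} (h𝒳 : IsResolving R 𝒳) {A B : ModuleCat.{u} R}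
    (hA : A ∈ 𝒳) (hB : B ∈ 𝒳) : ModuleCat.of R (A × B) ∈ 𝒳 :=
  h𝒳.extClosed A (ModuleCat.of R (A × B)) B (LinearMap.inl R A B) (LinearMap.snd R A B)
    ⟨LinearMap.inl_injective, Function.Exact.inl_snd, LinearMap.snd_surjective⟩ hA hB

lemma resol_pow {𝒳 : Set (ModuleCat.{u} R)} (h𝒳 : IsResolving R 𝒳) {A : ModuleCat.{u} R}
    (hA : A ∈ 𝒳) (m : ℕ) : ModuleCat.of R (Fin m → A) ∈ 𝒳 := by
  induction m with
  | zero =>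
    have h1 : Module.Finite R (Fin 0 → A) := Module.Finite.of_finite
    exact h𝒳.freeMem (ModuleCat.of R (Fin 0 → A)) h1 (Module.Free.of_subsingleton R (Fin 0 → A))
  | succ m ih =>
    exact h𝒳.isoClosed (resol_prod h𝒳 hA ih) (Fin.consLinearEquiv R (fun _ : Fin (m+1) => (A : Type u)))

lemma approx_kernel [IsNoetherianRing R] {𝒳 : Set (ModuleCat.{u} R)} (h𝒳 : IsResolving R 𝒳)
    (hF : ∀ X ∈ 𝒳, ∃ (Y X' : ModuleCat.{u} R) (f : ↥X →ₗ[R] ↥Y) (g : ↥Y →ₗ[R] ↥X'),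
      IsSES R f g ∧ X' ∈ 𝒳 ∧ Module.Free R Y) {X M : ModuleCat.{u} R} (f : X →ₗ[R] M)
    (hX : X ∈ 𝒳) (hf : ∀ W ∈ 𝒳, ∀ g : ↥W →ₗ[R] ↥M, ∃ h : ↥W →ₗ[R] ↥X, f ∘ₗ h = g) :
    ∃ (X₁ : ModuleCat.{u} R) (g : X₁ →ₗ[R] X), X₁ ∈ 𝒳 ∧ (∀ x, f (g x) = 0) ∧
      ∀ W ∈ 𝒳, ∀ h : W →ₗ[R] X, (∀ w, f (h w) = 0) → ∃ l : W →ₗ[R] X₁, g ∘ₗ l = h := by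
  have := h𝒳.finite X hX
  obtain ⟨n, πF, hπF⟩ := Module.Finite.exists_fin' R (LinearMap.ker f)
  obtain ⟨m, π, hπ⟩ := Module.Finite.exists_fin' R (X →ₗ[R] LinearMap.ker f)
  let σ : (Fin m → X) →ₗ[R] LinearMap.ker f :=
    ∑ i, (π (Pi.single i 1)) ∘ₗ (LinearMap.proj i)
  refine ⟨ModuleCat.of R ((Fin n → R) × (Fin m → X)),
    (LinearMap.ker f).subtype ∘ₗ (πF.coprod σ), ?_, ?_, ?_⟩
  · refine resol_prod h𝒳 (A := ModuleCat.of R (Fin n → R)) (B := ModuleCat.of R (Fin m → X)) ?_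
      (resol_pow h𝒳 hX m)
    have h1 : Module.Finite R (Fin n → R) := inferInstance
    have h2 : Module.Free R (Fin n → R) := inferInstance
    exact h𝒳.freeMem (ModuleCat.of R (Fin n → R)) h1 h2
  · intro x
    exact (πF.coprod σ x).2
  intro W hW h hh
  obtain ⟨Y, W', i, p, ⟨hi, hip, hp⟩, hW', hY⟩ := hF W hW
  let N : Submodule R (X × Y) := LinearMap.range (h.prod (-i))
  let ιX : X →ₗ[R] (X × Y) ⧸ N := N.mkQ ∘ₗ LinearMap.inl R X Y
  let ιY : Y →ₗ[R] (X × Y) ⧸ N := N.mkQ ∘ₗ LinearMap.inr R X Y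
  have hpi : ∀ w, p (i w) = 0 := fun w => (hip (i w)).mpr ⟨w, rfl⟩
  let q : ((X × Y) ⧸ N) →ₗ[R] W' := N.liftQ (p ∘ₗ LinearMap.snd R X Y) (by
    rintro _ ⟨w, rfl⟩
    simp [hpi])
  let f' : ((X × Y) ⧸ N) →ₗ[R] M := N.liftQ (f ∘ₗ LinearMap.fst R X Y) (by
    rintro _ ⟨w, rfl⟩
    simp [hh])
  have hP : ModuleCat.of R ((X × Y) ⧸ N) ∈ 𝒳 := by
    refine h𝒳.extClosed X (ModuleCat.of R ((X × Y) ⧸ N)) W' ιX q ⟨?_, ?_, ?_⟩ hX hW'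
    · refine (injective_iff_map_eq_zero ιX).mpr fun x hx => ?_
      obtain ⟨w, hw⟩ := (Submodule.Quotient.mk_eq_zero N).mp hx
      have h1 : h w = x := congrArg Prod.fst hw
      have h2 : -i w = 0 := congrArg Prod.snd hw
      have h3 : w = 0 := hi (by rw [map_zero]; exact neg_eq_zero.mp h2)
      rw [← h1, h3, map_zero]
    · intro z
      constructor
      · obtain ⟨⟨x, y⟩, rfl⟩ := N.mkQ_surjective z
        intro hz
        obtain ⟨w, hw⟩ := (hip y).mp hz
        refine ⟨x + h w, ?_⟩
        refine (Submodule.Quotient.eq N).mpr ⟨w, ?_⟩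
        simp [hw]
      · rintro ⟨x, rfl⟩
        change p 0 = 0
        exact map_zero p
    · intro w
      obtain ⟨y, rfl⟩ := hp w
      exact ⟨ιY y, rfl⟩
  obtain ⟨H, hH⟩ := hf _ hP f'
  have hH' : ∀ z, f (H z) = f' z := fun z => LinearMap.congr_fun hH z
  have heq : ∀ w, H (ιX (h w)) = H (ιY (i w)) := by
    intro w
    congr 1
    refine (Submodule.Quotient.eq N).mpr ⟨w, ?_⟩
    simp
  let b : Y →ₗ[R] LinearMap.ker f := (H ∘ₗ ιY).codRestrict _ (fun y => by
    rw [LinearMap.mem_ker]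
    refine (hH' (ιY y)).trans ?_
    change f 0 = 0
    exact map_zero f)
  let δ : X →ₗ[R] LinearMap.ker f := (LinearMap.id - H ∘ₗ ιX).codRestrict _ (fun x => by
    rw [LinearMap.mem_ker, LinearMap.sub_apply, map_sub, sub_eq_zero]
    exact (hH' (ιX x)).symm)
  have hYp : Module.Projective R Y := Module.Projective.of_free
  obtain ⟨b', hb'⟩ := Module.projective_lifting_property πF b hπF
  obtain ⟨c, hc⟩ := hπ δ
  refine ⟨(b' ∘ₗ i).prod (LinearMap.pi fun j => c j • h), ?_⟩
  ext w
  have h1 : πF (b' (i w)) = b (i w) := LinearMap.congr_fun hb' (i w)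
  have h2 : σ (fun j => c j • h w) = δ (h w) := by
    rw [← hc]
    have : c = ∑ j, c j • (Pi.single j (1:R) : Fin m → R) := by
      ext k; simp [Finset.sum_apply, Pi.single_apply]
    conv_rhs => rw [this]
    simp [σ]
  change ((πF (b' (i w)) + σ (fun j => c j • h w) : LinearMap.ker f) : X) = h w
  rw [h1, h2]
  change H (ιY (i w)) + (h w - H (ιX (h w))) = h w
  rw [heq]
  abel

end helpers

/-- Over a henselian Gorenstein local ring satisfying (ARC), a resolving
subcategory consisting of maximal Cohen–Macaulay modules and satisfying condition (A)
is coherent. -/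
theorem stmt17 (R : Type u) [CommRing R] [IsNoetherianRing R] [IsLocalRing R]
    [HenselianLocalRing R] (hG : IsGorensteinLocalRing R)
    (hARC : ∀ M : ModuleCat.{u} R, Module.Finite R M →
      (∀ i, 0 < i → ExtVanish R i M (ModuleCat.of R (↥M × R))) → Module.Free R M)
    (𝒳 : Set (ModuleCat.{u} R)) (h𝒳 : IsResolving R 𝒳) (hMCM : ∀ M ∈ 𝒳, IsMCM R M)
    (hA : ∀ X ∈ 𝒳, ∃ (Y X' : ModuleCat.{u} R) (f : ↥X →ₗ[R] ↥Y) (g : ↥Y →ₗ[R] ↥X'),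
      IsSES R f g ∧ X' ∈ 𝒳 ∧ Y ∈ 𝒳 ∧ Y ∈ XPerp R 𝒳) :
    Coherent R 𝒳 := by
  have hF : ∀ X ∈ 𝒳, ∃ (Y X' : ModuleCat.{u} R) (f : ↥X →ₗ[R] ↥Y) (g : ↥Y →ₗ[R] ↥X'),
      IsSES R f g ∧ X' ∈ 𝒳 ∧ Module.Free R Y := by
    intro X hX
    obtain ⟨Y, X', f, g, h, hX', hY, hY'⟩ := hA X hX
    exact ⟨Y, X', f, g, h, hX', arc_free hG hARC Y hY'.1 (hMCM Y hY) (hY'.2 Y hY)⟩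
  intro M _
  constructor
  · rintro ⟨X₀, X₁, g, f, h0, h1, h⟩
    exact ⟨X₀, f, h0, fun W hW k => (h W hW).1 k⟩
  · rintro ⟨X, f, hX, hf⟩
    obtain ⟨X₁, g, hX₁, hg, h⟩ := approx_kernel h𝒳 hF f hX hf
    refine ⟨X, X₁, g, f, hX, hX₁, fun W hW => ⟨fun k => hf W hW k, fun k => ⟨fun hk => ?_, ?_⟩⟩⟩
    · exact h W hW k (fun w => LinearMap.congr_fun hk w)
    · rintro ⟨l, rfl⟩
      ext w
      exact hg (l w)
end
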